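/- arXiv:2404.07393 — 3 statements merged into one kernel-verified Lean document; each statement's English description precedes it below -/
import Mathlib

section
/- Let c ≥ 1, α ≥ 0, β ≥ α + 2, and let λ = (λ_1, …, λ_α, c^β, λ_{α+β+1}, …) be a partition of n with λ_{α+β+1} < c, and additionally c < λ_α when α > 0. Let μ = (λ_1, …, λ_α, c+1, c^{β−2}, c−1, λ_{α+β+1}, …) be the partition obtained from λ by moving one box from the last row of the block of rows of length c to the first row of that block. Then K_{λ,ν} ≤ K_{μ,ν} for every partition ν of n; in particular λ ≤_I μ in the immersion poset. -/
open Finset MvPolynomial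

/-- A partition of `n`, represented as a weakly decreasing list of positive
integers summing to `n`. -/
def IsPartitionOf (n : ℕ) (l : List ℕ) : Prop :=
  l.Pairwise (· ≥ ·) ∧ (∀ x ∈ l, 0 < x) ∧ l.sum = n

/-- `T : ℕ → ℕ → ℕ` is a semistandard Young tableau of shape `l`
(rows weakly increase, columns strictly increase, entries are `0` outside
of the diagram; entries are 0-indexed, so entry value `k` stands for the
letter `k+1`). -/
def IsSSYT (l : List ℕ) (T : ℕ → ℕ → ℕ) : Prop :=
  (∀ i j1 j2, j1 ≤ j2 → j2 < l.getD i 0 → T i j1 ≤ T i j2) ∧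
  (∀ i1 i2 j, i1 < i2 → j < l.getD i2 0 → T i1 j < T i2 j) ∧
  (∀ i j, l.getD i 0 ≤ j → T i j = 0)

/-- The tableau `T` of shape `l` has content `ν`: for every `k`, the number of
cells of the diagram of `l` whose entry is `k` equals the `(k+1)`-st part of `ν`. -/
def HasContent (l : List ℕ) (T : ℕ → ℕ → ℕ) (ν : List ℕ) : Prop :=
  ∀ k, Nat.card {c : ℕ × ℕ // c.2 < l.getD c.1 0 ∧ T c.1 c.2 = k} = ν.getD k 0

/-- The Kostka number `K_{l,ν}`: the number of semistandard Young tableaux of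
shape `l` and content `ν`. -/
noncomputable def kostka (l ν : List ℕ) : ℕ :=
  Nat.card {T : ℕ → ℕ → ℕ // IsSSYT l T ∧ HasContent l T ν}

/-- `f^λ`, the number of standard Young tableaux of shape `l`. -/
noncomputable def fSYT (l : List ℕ) : ℕ := kostka l (List.replicate l.sum 1)

/-- Dominance order: all partial sums of `l` are at most those of `m`. -/
def DomLE (l m : List ℕ) : Prop := ∀ k, (l.take k).sum ≤ (m.take k).sum

/-- The standard immersion order: dominance together with `f^λ ≤ f^μ`. -/
def StdLE (l m : List ℕ) : Prop := DomLE l m ∧ fSYT l ≤ fSYT m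

/-- Strict standard immersion order. -/
def StdLT (l m : List ℕ) : Prop := StdLE l m ∧ l ≠ m

/-- `m` covers `l` in the standard immersion poset on partitions of `n`. -/
def StdCovBy (n : ℕ) (l m : List ℕ) : Prop :=
  StdLT l m ∧ ∀ ν, IsPartitionOf n ν → StdLT l ν → ¬ StdLT ν m

/-- `l` is a maximal element of the standard immersion poset on partitions of `n`. -/
def StdMaximal (n : ℕ) (l : List ℕ) : Prop :=
  ∀ m, IsPartitionOf n m → m ≠ l → ¬ StdLE l m

/-- The immersion order on partitions of `n`: `l ≤_I m` iff
`K_{l,α} ≤ K_{m,α}` for every partition `α` of `n`. -/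
def ImmersionLE (n : ℕ) (l m : List ℕ) : Prop :=
  ∀ ν, IsPartitionOf n ν → kostka l ν ≤ kostka m ν

/-- Strict immersion order. -/
def ImmersionLT (n : ℕ) (l m : List ℕ) : Prop := ImmersionLE n l m ∧ l ≠ m

/-- `m` covers `l` in the immersion poset on partitions of `n`. -/
def ImmersionCovBy (n : ℕ) (l m : List ℕ) : Prop :=
  ImmersionLT n l m ∧ ∀ ν, IsPartitionOf n ν → ImmersionLT n l ν → ¬ ImmersionLT n ν m

/-- The partition `μ` obtained from `λ = pre ++ c^β ++ suf` by moving one box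
from the last row of the block of rows of length `c` to the first row of that
block (the part `c - 1` is dropped when it equals zero). -/
def movedShape (c β : ℕ) (pre suf : List ℕ) : List ℕ :=
  pre ++ (c + 1) :: (List.replicate (β - 2) c ++ ((c - 1) :: suf).filter (fun x => x ≠ 0))

namespace MovedBox

/-- counting entries of `f` below `z` among the first `n`. -/
def cnt (n : ℕ) (f : ℕ → ℕ) (z : ℕ) : ℕ := ((Finset.range n).filter (fun i => f i < z)).card

lemma cnt_eq_sum (n : ℕ) (f : ℕ → ℕ) (z : ℕ) :
    cnt n f z = ∑ i ∈ Finset.range n, if f i < z then 1 else 0 := by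
  simp [cnt]

lemma sum_skip (n r : ℕ) (hr : r < n + 1) (f : ℕ → ℕ) :
    ∑ i ∈ Finset.range (n + 1), f i
      = f r + ∑ i ∈ Finset.range n, f (if i < r then i else i + 1) := by
  induction n with
  | zero =>
    have : r = 0 := by omega
    subst this
    simp
  | succ n ih =>
    by_cases h : r = n + 1
    · subst h
      rw [Finset.sum_range_succ, add_comm]
      congr 1
      refine Finset.sum_congr rfl fun i hi => ?_
      rw [if_pos (Finset.mem_range.1 hi)]
    · rw [Finset.sum_range_succ, ih (by omega), Finset.sum_range_succ]
      rw [if_neg (by omega : ¬ n < r)]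
      ring

lemma cnt_skip (n r : ℕ) (hr : r < n + 1) (f g : ℕ → ℕ)
    (hg : ∀ i < n, g i = f (if i < r then i else i + 1)) (z : ℕ) :
    cnt (n + 1) f z = (if f r < z then 1 else 0) + cnt n g z := by
  rw [cnt_eq_sum, cnt_eq_sum, sum_skip n r hr]
  congr 1
  refine Finset.sum_congr rfl fun i hi => ?_
  rw [hg i (Finset.mem_range.1 hi)]

lemma cnt_mono (n : ℕ) (f : ℕ → ℕ) {z w : ℕ} (h : z ≤ w) : cnt n f z ≤ cnt n f w := by
  apply Finset.card_le_card
  intro i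
  simp only [Finset.mem_filter]
  rintro ⟨h1, h2⟩
  exact ⟨h1, by omega⟩

lemma cnt_le (n : ℕ) (f : ℕ → ℕ) (z : ℕ) : cnt n f z ≤ n := by
  simpa [cnt] using Finset.card_filter_le (Finset.range n) (fun i => f i < z)

lemma cnt_strict (n r : ℕ) (f : ℕ → ℕ) (hr : r < n)
    (hf : ∀ i j, i < j → j < n → f i < f j) : cnt n f (f r) = r := by
  have : (Finset.range n).filter (fun i => f i < f r) = Finset.range r := by
    ext i
    simp only [Finset.mem_filter, Finset.mem_range]
    constructor
    · rintro ⟨h1, h2⟩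
      by_contra h
      rcases eq_or_lt_of_le (not_lt.1 h) with h3 | h3
      · subst h3; omega
      · have := hf r i h3 h1; omega
    · intro h
      exact ⟨by omega, hf i r h hr⟩
  rw [cnt, this, Finset.card_range]

lemma cnt_strict_succ (n r : ℕ) (f : ℕ → ℕ) (hr : r < n)
    (hf : ∀ i j, i < j → j < n → f i < f j) : cnt n f (f r + 1) = r + 1 := by
  have : (Finset.range n).filter (fun i => f i < f r + 1) = Finset.range (r + 1) := by
    ext i
    simp only [Finset.mem_filter, Finset.mem_range]
    constructor
    · rintro ⟨h1, h2⟩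
      by_contra h
      have := hf r i (by omega) h1
      omega
    · intro h
      rcases eq_or_lt_of_le (Nat.lt_succ_iff.1 h) with h3 | h3
      · subst h3; omega
      · exact ⟨by omega, by have := hf i r h3 hr; omega⟩
  rw [cnt, this, Finset.card_range]

lemma cnt_not_mem (n : ℕ) (f : ℕ → ℕ) (z : ℕ) (h : ∀ i < n, f i ≠ z) :
    cnt n f (z + 1) = cnt n f z := by
  unfold cnt
  congr 1
  apply Finset.filter_congr
  intro i hi
  have := h i (Finset.mem_range.1 hi)
  omega

/-- selection data for the moved entry. -/
structure Good (A B : ℕ) (a b : ℕ → ℕ) (r k : ℕ) : Prop where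
  hr1 : B + 1 ≤ r
  hr2 : r < A
  hk : k ≤ B
  hlt : ∀ i < k, b i < a r
  hgt : ∀ i, k ≤ i → i < B → a r < b i
  hD1 : ∀ z, (cnt A a z : ℤ) - cnt B b z ≤ (cnt A a (a r) : ℤ) - cnt B b (a r) + 1
  hD2 : ∀ z ≤ a r, (cnt A a z : ℤ) - cnt B b z ≤ (cnt A a (a r) : ℤ) - cnt B b (a r)

lemma exists_argmax (D : ℕ → ℤ) (N : ℤ) (hN : ∀ z, D z ≤ N) :
    ∃ z0, (∀ z, D z ≤ D z0) ∧ ∀ z < z0, D z < D z0 := by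
  classical
  have hex : ∃ z1, ∀ z, D z ≤ D z1 := by
    obtain ⟨m, ⟨z1, hz1⟩, hm⟩ := Int.exists_greatest_of_bdd (P := fun m => ∃ z, D z = m)
      ⟨N, by rintro m ⟨z, rfl⟩; exact hN z⟩ ⟨D 0, 0, rfl⟩
    exact ⟨z1, fun z => hz1 ▸ hm _ ⟨z, rfl⟩⟩
  refine ⟨Nat.find hex, Nat.find_spec hex, fun z hz => ?_⟩
  have h := Nat.find_min hex hz
  push Not at h
  obtain ⟨w, hw⟩ := h
  exact lt_of_lt_of_le hw (Nat.find_spec hex w)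

lemma exists_good (A B : ℕ) (a b : ℕ → ℕ) (hAB : 2 * B + 2 ≤ A)
    (ha : ∀ i j, i < j → j < A → a i < a j) (hb : ∀ i j, i < j → j < B → b i < b j) :
    ∃ r k, Good A B a b r k := by
  classical
  obtain ⟨z0, h1, h2⟩ := exists_argmax (fun z => (cnt A a z : ℤ) - cnt B b z) A
    (fun z => by have := cnt_le A a z; omega)
  have hbig : ((A : ℤ) - B) ≤ (cnt A a z0 : ℤ) - cnt B b z0 := by
    have e := cnt_strict_succ A (A - 1) a (by omega) ha
    have e2 := cnt_le B b (a (A - 1) + 1)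
    have := h1 (a (A - 1) + 1)
    omega
  have hz0 : z0 ≠ 0 := by
    rintro rfl
    simp [cnt] at hbig
    omega
  obtain ⟨y, rfl⟩ := Nat.exists_eq_succ_of_ne_zero hz0
  simp only [Nat.succ_eq_add_one] at *
  have hstep := h2 y (by omega)
  have hmB := cnt_mono B b (Nat.le_succ y)
  have hyA : ∃ r < A, a r = y := by
    by_contra hcon
    push Not at hcon
    have := cnt_not_mem A a y hcon
    simp only [Nat.succ_eq_add_one] at *
    omega
  obtain ⟨r, hr, rfl⟩ := hyA
  have e1 := cnt_strict A r a hr ha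
  have e2 := cnt_strict_succ A r a hr ha
  have hyB : ∀ i < B, b i ≠ a r := by
    intro i hi hbi
    have e3 := cnt_strict B i b hi hb
    have e4 := cnt_strict_succ B i b hi hb
    rw [hbi] at e3 e4
    omega
  have e5 := cnt_not_mem B b (a r) hyB
  have hkex : ∃ k, k = B ∨ a r ≤ b k := ⟨B, Or.inl rfl⟩
  have hkB : Nat.find hkex ≤ B := Nat.find_min' hkex (Or.inl rfl)
  refine ⟨r, Nat.find hkex, ?_, hr, hkB, ?_, ?_, ?_, ?_⟩
  · omega
  · intro i hi
    have := Nat.find_min hkex hi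
    omega
  · intro i hi hiB
    have h3 := Nat.find_spec hkex
    have h4 : a r ≤ b (Nat.find hkex) := by
      rcases h3 with h3 | h3
      · omega
      · exact h3
    have h5 := hyB i hiB
    rcases eq_or_lt_of_le hi with h6 | h6
    · rw [h6] at h4; omega
    · have := hb _ _ h6 hiB; omega
  · intro z
    have := h1 z
    omega
  · intro z hz
    have := h2 z (by omega)
    omega

/-- The new tableau. -/
def move (A B p : ℕ) (T : ℕ → ℕ → ℕ) (r k : ℕ) : ℕ → ℕ → ℕ := fun i j =>
  if j = p then (if i < r then T i p else if i + 1 < A then T (i + 1) p else 0)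
  else if j = p + 1 then
    (if i < k then T i (p + 1) else if i = k then T r p else if i ≤ B then T (i - 1) (p + 1) else 0)
  else T i j

/-- Shape hypotheses. -/
structure Shapes (A B p : ℕ) (l m : List ℕ) : Prop where
  anti : ∀ i j, i ≤ j → l.getD j 0 ≤ l.getD i 0
  l1 : ∀ i < B, p + 2 ≤ l.getD i 0
  l2 : ∀ i, B ≤ i → i < A → l.getD i 0 = p + 1
  l3 : ∀ i, A ≤ i → l.getD i 0 ≤ p
  m1 : m.getD B 0 = p + 2
  m2 : m.getD (A - 1) 0 = p
  m3 : ∀ i, i ≠ B → i ≠ A - 1 → m.getD i 0 = l.getD i 0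
  hAB : 2 * B + 2 ≤ A

lemma move_ssyt {A B p : ℕ} {l m : List ℕ} (S : Shapes A B p l m) {T : ℕ → ℕ → ℕ}
    (hT : IsSSYT l T) {r k : ℕ} (hg : Good A B (fun i => T i p) (fun i => T i (p + 1)) r k) :
    IsSSYT m (move A B p T r k) := by
  obtain ⟨anti, l1, l2, l3, m1, m2, m3, hAB⟩ := S
  obtain ⟨hr1, hr2, hk, hlt, hgt, -, -⟩ := hg
  obtain ⟨hrow, hcol, hz⟩ := hT
  have hin : ∀ i j, j < m.getD i 0 → j ≠ p + 1 → j < l.getD i 0 := by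
    intro i j h1 h2
    by_cases hB : i = B
    · have := l2 B le_rfl (by omega); subst hB; omega
    · by_cases hA : i = A - 1
      · have := l2 i (by omega) (by omega); rw [hA, m2] at h1; omega
      · rw [m3 i hB hA] at h1; exact h1
  have hinB : ∀ i, p + 1 < m.getD i 0 → i ≤ B := by
    intro i h
    by_contra hB
    by_cases hA : i = A - 1
    · rw [hA, m2] at h; omega
    · rw [m3 i (by omega) hA] at h
      have := l2 i (by omega)
      have := l3 i
      omega
  have hinA : ∀ i, p < m.getD i 0 → i + 1 < A := by
    intro i h
    by_contra hB
    by_cases hA : i = A - 1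
    · rw [hA, m2] at h; omega
    · rw [m3 i (by omega) hA] at h
      have := l3 i
      omega
  have hinC : ∀ i, p + 2 < m.getD i 0 → i < B := by
    intro i h
    have h1 := hinB i (by omega)
    by_contra h2
    have : i = B := by omega
    subst this
    omega
  have hA' : ∀ i < A, p < l.getD i 0 := by
    intro i h
    have := l1 i
    have := l2 i
    omega
  have hB' : ∀ i < B, p + 1 < l.getD i 0 := by
    intro i h
    have := l1 i
    omega
  have hcA : ∀ i j, i < j → j < A → T i p < T j p :=
    fun i j h1 h2 => hcol i j p h1 (hA' j h2)
  have hcA' : ∀ i j, i ≤ j → j < A → T i p ≤ T j p := by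
    intro i j h1 h2
    rcases eq_or_lt_of_le h1 with h | h
    · rw [h]
    · exact (hcA i j h h2).le
  have hcB : ∀ i j, i < j → j < B → T i (p + 1) < T j (p + 1) :=
    fun i j h1 h2 => hcol i j (p + 1) h1 (hB' j h2)
  have key : ∀ i ≤ B, T i p ≤ move A B p T r k i (p + 1) := by
    intro i hi
    simp only [move, if_neg (by omega : ¬ p + 1 = p), if_true]
    split_ifs with h1 h2
    · exact hrow i p (p + 1) (by omega) (hB' i (by omega))
    · exact hcA' i r (by omega) hr2
    · have := hcA' i r (by omega) hr2
      have := hgt (i - 1) (by omega) (by omega)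
      omega
  refine ⟨?_, ?_, ?_⟩
  · intro i j1 j2 hj hj2
    rcases eq_or_lt_of_le hj with rfl | hlt'
    · exact le_rfl
    by_cases c1 : j2 < p
    · have := hrow i j1 j2 hj (hin i j2 hj2 (by omega))
      simp only [move, if_neg (by omega : ¬ j1 = p), if_neg (by omega : ¬ j2 = p),
        if_neg (by omega : ¬ j1 = p + 1), if_neg (by omega : ¬ j2 = p + 1)]
      exact this
    by_cases c2 : j2 = p
    · subst c2
      have hiA := hinA i hj2
      simp only [move, if_neg (by omega : ¬ j1 = j2), if_neg (by omega : ¬ j1 = j2 + 1), if_true]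
      split_ifs with h1
      · exact hrow i j1 j2 hj (hA' i (by omega))
      · have h3 := hrow (i + 1) j1 j2 hj (hA' (i + 1) (by omega))
        have h4 := hcol i (i + 1) j1 (by omega) (by have := hA' (i + 1) (by omega); omega)
        omega
    by_cases c3 : j2 = p + 1
    · subst c3
      have hiB := hinB i hj2
      have hk := key i hiB
      by_cases c4 : j1 = p
      · subst c4
        have : move A B j1 T r k i j1 = T i j1 := by simp [move, (by omega : i < r)]
        omega
      · have h5 : move A B p T r k i j1 = T i j1 := by
          simp only [move, if_neg c4, if_neg (by omega : ¬ j1 = p + 1)]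
        have := hrow i j1 p (by omega) (hA' i (by omega))
        omega
    have hiB := hinC i (by omega)
    have hj2l := hin i j2 hj2 c3
    have e2 : move A B p T r k i j2 = T i j2 := by simp [move, c2, c3]
    rw [e2]
    by_cases c4 : j1 = p
    · subst c4
      have : move A B j1 T r k i j1 = T i j1 := by simp [move, (by omega : i < r)]
      rw [this]
      exact hrow i _ _ hj hj2l
    by_cases c5 : j1 = p + 1
    · subst c5
      have h0 := hrow i _ _ hj hj2l
      simp only [move, if_neg (by omega : ¬ p + 1 = p), if_true]
      split_ifs with h1 h2 h3
      · exact h0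
      · subst h2
        have := hgt i le_rfl hiB
        omega
      · have := hcB (i - 1) i (by omega) hiB
        omega
      · omega
    · have h5 : move A B p T r k i j1 = T i j1 := by
        simp [move, c4, c5]
      rw [h5]
      exact hrow i _ _ hj hj2l
  · intro i1 i2 j hi hj
    by_cases c1 : j = p
    · subst c1
      have hiA := hinA i2 hj
      simp only [move, if_true]
      split_ifs <;> first | omega | (apply hcA <;> omega)
    by_cases c2 : j = p + 1
    · subst c2
      have hiB := hinB i2 hj
      simp only [move, if_neg (by omega : ¬ p + 1 = p), if_true]
      split_ifs <;> first
        | omega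
        | (apply hcB <;> omega)
        | (apply hlt; omega)
        | (apply hgt <;> omega)
    · simp only [move, if_neg c1, if_neg c2]
      exact hcol i1 i2 j hi (hin i2 j hj c2)
  · intro i j hj
    by_cases c1 : j = p
    · subst c1
      have : A ≤ i + 1 := by
        by_contra hcon
        by_cases hB : i = B
        · subst hB; omega
        · rw [m3 i hB (by omega)] at hj
          have := hA' i (by omega)
          omega
      simp only [move, if_true]
      rw [if_neg (by omega), if_neg (by omega)]
    by_cases c2 : j = p + 1
    · subst c2
      have : B < i := by
        by_contra hcon
        by_cases hB : i = B
        · subst hB; omega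
        · rw [m3 i hB (by omega)] at hj
          have := hB' i (by omega)
          omega
      simp only [move, if_neg (by omega : ¬ p + 1 = p), if_true]
      rw [if_neg (by omega), if_neg (by omega), if_neg (by omega)]
    · simp only [move, if_neg c1, if_neg c2]
      apply hz
      by_cases hB : i = B
      · subst hB; have := l2 i le_rfl (by omega); omega
      by_cases hA : i = A - 1
      · have := l2 i (by omega) (by omega); rw [hA, m2] at hj; omega
      rw [← m3 i hB hA]; exact hj

lemma move_content {A B p : ℕ} {l m : List ℕ} (S : Shapes A B p l m) {T : ℕ → ℕ → ℕ}
    {r k : ℕ} (hg : Good A B (fun i => T i p) (fun i => T i (p + 1)) r k) {ν : List ℕ}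
    (hT : HasContent l T ν) :
    HasContent m (move A B p T r k) ν := by
  obtain ⟨anti, l1, l2, l3, m1, m2, m3, hAB⟩ := S
  obtain ⟨hr1, hr2, hk, -, -, -, -⟩ := hg
  intro v
  rw [← hT v]
  have hmA : ∀ i, p < m.getD i 0 ↔ i + 1 < A := by
    intro i
    by_cases hB : i = B
    · subst hB; omega
    by_cases hA : i = A - 1
    · rw [hA, m2]; omega
    rw [m3 i hB hA]
    have := l1 i
    have := l2 i
    have := l3 i
    omega
  have hmB : ∀ i, p + 1 < m.getD i 0 ↔ i ≤ B := by
    intro i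
    by_cases hB : i = B
    · subst hB; omega
    by_cases hA : i = A - 1
    · rw [hA, m2]; omega
    rw [m3 i hB hA]
    have := l1 i
    have := l2 i
    have := l3 i
    omega
  have hlA : ∀ i, p < l.getD i 0 ↔ i < A := by
    intro i
    have := l1 i
    have := l2 i
    have := l3 i
    omega
  have hlB : ∀ i, p + 1 < l.getD i 0 ↔ i < B := by
    intro i
    have := l1 i
    have := l2 i
    have := l3 i
    omega
  have hml : ∀ i j, j ≠ p → j ≠ p + 1 → (j < m.getD i 0 ↔ j < l.getD i 0) := by
    intro i j h1 h2
    by_cases hB : i = B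
    · subst hB; have := l2 i le_rfl (by omega); omega
    by_cases hA : i = A - 1
    · have := l2 (A - 1) (by omega) (by omega); rw [hA, m2]; omega
    rw [m3 i hB hA]
  let φ : ℕ × ℕ → ℕ × ℕ := fun q =>
    if q.2 = p then (if q.1 < r then q else if q.1 = r then (k, p + 1) else (q.1 - 1, p))
    else if q.2 = p + 1 then (if q.1 < k then q else (q.1 + 1, p + 1)) else q
  let ψ : ℕ × ℕ → ℕ × ℕ := fun q =>
    if q.2 = p then (if q.1 < r then q else (q.1 + 1, p))
    else if q.2 = p + 1 then
      (if q.1 < k then q else if q.1 = k then (r, p) else (q.1 - 1, p + 1)) else q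
  refine Nat.card_congr ⟨fun q => ⟨ψ q.1, ?_⟩, fun q => ⟨φ q.1, ?_⟩, ?_, ?_⟩
  · obtain ⟨⟨i, j⟩, h1, h2⟩ := q
    simp only [move] at h1 h2
    simp only [ψ]
    grind
  · obtain ⟨⟨i, j⟩, h1, h2⟩ := q
    simp only at h1 h2
    clear anti l1 l2 l3 m1 m2 m3 hT
    by_cases c1 : j = p
    · subst c1
      rcases lt_trichotomy i r with hh | hh | hh
      · simp only [φ, move, hh, if_true]
        grind
      · subst hh
        simp only [φ, move, lt_irrefl, if_true, if_false]
        grind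
      · simp only [φ, move, if_neg (not_lt_of_gt hh), if_neg hh.ne', if_true]
        grind
    by_cases c2 : j = p + 1
    · subst c2
      by_cases hh : i < k
      · simp only [φ, move, hh, if_true, if_neg c1]
        grind
      · simp only [φ, move, hh, if_true, if_false, if_neg c1]
        grind
    · simp only [φ, move, if_neg c1, if_neg c2]
      grind
  · rintro ⟨⟨i, j⟩, h1, h2⟩
    simp only at h1
    apply Subtype.ext
    change φ (ψ (i, j)) = (i, j)
    clear h2 anti l1 l2 l3 m1 m2 m3 hT
    by_cases c1 : j = p
    · subst c1
      by_cases hh : i < r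
      · simp only [ψ, φ, hh, if_true]
      · simp only [ψ, φ, hh, if_true, if_false]
        grind
    by_cases c2 : j = p + 1
    · subst c2
      rcases lt_trichotomy i k with hh | hh | hh
      · simp only [ψ, φ, hh, if_true, if_neg c1]
      · subst hh
        simp only [ψ, φ, lt_irrefl, if_true, if_false, if_neg c1]
      · simp only [ψ, φ, if_neg (not_lt_of_gt hh), if_neg hh.ne', if_true, if_neg c1]
        grind
    · simp only [ψ, φ, if_neg c1, if_neg c2]
  · rintro ⟨⟨i, j⟩, h1, h2⟩
    simp only at h1
    apply Subtype.ext
    change ψ (φ (i, j)) = (i, j)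
    clear h2 anti l1 l2 l3 m1 m2 m3 hT
    by_cases c1 : j = p
    · subst c1
      rcases lt_trichotomy i r with hh | hh | hh
      · simp only [ψ, φ, hh, if_true]
      · subst hh
        simp only [ψ, φ, lt_irrefl, if_true, if_false, if_neg (by omega : ¬ j + 1 = j)]
      · simp only [ψ, φ, if_neg (not_lt_of_gt hh), if_neg hh.ne', if_true]
        grind
    by_cases c2 : j = p + 1
    · subst c2
      by_cases hh : i < k
      · simp only [ψ, φ, hh, if_true, if_neg c1]
      · simp only [ψ, φ, hh, if_true, if_false, if_neg c1]
        grind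
    · simp only [ψ, φ, if_neg c1, if_neg c2]

lemma move_inj {A B p : ℕ} (hAB : 2 * B + 2 ≤ A) {T U : ℕ → ℕ → ℕ} {r k s t : ℕ}
    (ha : ∀ i j, i < j → j < A → T i p < T j p)
    (ha' : ∀ i j, i < j → j < A → U i p < U j p)
    (hzT : ∀ i, A ≤ i → T i p = 0) (hzU : ∀ i, A ≤ i → U i p = 0)
    (hzT' : ∀ i, B ≤ i → T i (p + 1) = 0) (hzU' : ∀ i, B ≤ i → U i (p + 1) = 0)
    (hT : Good A B (fun i => T i p) (fun i => T i (p + 1)) r k)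
    (hU : Good A B (fun i => U i p) (fun i => U i (p + 1)) s t)
    (h : move A B p T r k = move A B p U s t) : T = U := by
  obtain ⟨A, rfl⟩ : ∃ A', A = A' + 1 := ⟨A - 1, by omega⟩
  have cA : ∀ (V : ℕ → ℕ → ℕ) (r k : ℕ), r < A + 1 → ∀ z, cnt (A + 1) (fun i => V i p) z
      = (if V r p < z then 1 else 0) + cnt A (fun i => move (A + 1) B p V r k i p) z := by
    intro V r k hr z
    apply cnt_skip A r hr
    intro i hi
    simp only [move, if_true]
    split_ifs <;> first | rfl | omega
  have cB : ∀ (V : ℕ → ℕ → ℕ) (r k : ℕ), k ≤ B →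
      ∀ z, cnt (B + 1) (fun i => move (A + 1) B p V r k i (p + 1)) z
      = (if V r p < z then 1 else 0) + cnt B (fun i => V i (p + 1)) z := by
    intro V r k hk z
    have := cnt_skip B k (by omega) (fun i => move (A + 1) B p V r k i (p + 1))
      (fun i => V i (p + 1)) (by
        intro i hi
        simp only [move, if_neg (by omega : ¬ p + 1 = p), if_true]
        split_ifs <;> first | rfl | omega) z
    rw [this]
    simp [move]
  have a1 := cA T r k hT.hr2
  have a2 := cA U s t hU.hr2
  have b1 := cB T r k hT.hk
  have b2 := cB U s t hU.hk
  rw [← h] at a2 b2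
  have hy : T r p = U s p := by
    have t1 := hT.hD1 (U s p)
    have t2 := hT.hD2 (U s p)
    have u1 := hU.hD1 (T r p)
    have u2 := hU.hD2 (T r p)
    have a11 := a1 (T r p)
    have a12 := a1 (U s p)
    have a21 := a2 (T r p)
    have a22 := a2 (U s p)
    have b11 := b1 (T r p)
    have b12 := b1 (U s p)
    have b21 := b2 (T r p)
    have b22 := b2 (U s p)
    simp only [lt_irrefl, if_false] at *
    rcases lt_trichotomy (T r p) (U s p) with hh | hh | hh
    · have := not_lt_of_gt hh
      simp only [hh, this, if_true, if_false] at *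
      omega
    · exact hh
    · have := not_lt_of_gt hh
      simp only [hh, this, if_true, if_false] at *
      omega
  have hcell : ∀ i j, move (A + 1) B p T r k i j = move (A + 1) B p U s t i j := by
    intro i j; rw [h]
  obtain ⟨hr1, hr2, hk, hlt, hgt, -, -⟩ := hT
  obtain ⟨hs1, hs2, ht, hlt', hgt', -, -⟩ := hU
  have hrs : r = s := by
    rcases lt_trichotomy r s with hh | hh | hh
    · have e := hcell r p
      simp only [move, if_true, lt_irrefl, if_false, hh] at e
      rw [if_pos (by omega)] at e
      have := ha r (r + 1) (by omega) (by omega)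
      have := ha' r s hh hs2
      omega
    · exact hh
    · have e := hcell s p
      simp only [move, if_true, lt_irrefl, if_false, hh] at e
      rw [if_pos (by omega)] at e
      have := ha s r hh hr2
      have := ha' s (s + 1) (by omega) (by omega)
      omega
  have hkt : k = t := by
    rcases lt_trichotomy k t with hh | hh | hh
    · have e := hcell k (p + 1)
      simp only [move, if_true, lt_irrefl, if_false, hh, if_neg (by omega : ¬ p + 1 = p)] at e
      have := hlt' k hh
      omega
    · exact hh
    · have e := hcell t (p + 1)
      simp only [move, if_true, lt_irrefl, if_false, hh, if_neg (by omega : ¬ p + 1 = p)] at e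
      have := hlt t hh
      omega
  subst hrs hkt
  funext i j
  by_cases c1 : j = p
  · subst c1
    rcases lt_trichotomy i r with hh | hh | hh
    · have e := hcell i j
      simpa [move, hh] using e
    · rw [hh, hy]
    · by_cases hA : i < A + 1
      · have e := hcell (i - 1) j
        simp only [move, if_true, if_neg (by omega : ¬ i - 1 < r),
          (by omega : i - 1 + 1 = i), if_pos hA] at e
        exact e
      · rw [hzT i (by omega), hzU i (by omega)]
  by_cases c2 : j = p + 1
  · subst c2
    by_cases hB : i < B
    · by_cases hik : i < k
      · have e := hcell i (p + 1)
        simpa [move, hik] using e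
      · have e := hcell (i + 1) (p + 1)
        simp only [move, if_true, if_neg (by omega : ¬ p + 1 = p),
          if_neg (by omega : ¬ i + 1 < k), if_neg (by omega : ¬ i + 1 = k),
          if_pos (by omega : i + 1 ≤ B), Nat.add_sub_cancel] at e
        exact e
    · rw [hzT' i (by omega), hzU' i (by omega)]
  · have e := hcell i j
    simpa [move, c1, c2] using e

lemma finite_ssyt (m ν : List ℕ) :
    Finite {T : ℕ → ℕ → ℕ // IsSSYT m T ∧ HasContent m T ν} := by
  have hlen : ∀ i, m.length ≤ i → m.getD i 0 = 0 := fun i hi => by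
    rw [List.getD_eq_getElem?_getD, List.getElem?_eq_none hi]; rfl
  have hsum : ∀ i, m.getD i 0 ≤ m.sum := by
    intro i
    by_cases h : i < m.length
    · rw [List.getD_eq_getElem _ _ h]
      exact List.le_sum_of_mem (List.getElem_mem h)
    · rw [hlen i (by omega)]; omega
  have hfin : ∀ (T : ℕ → ℕ → ℕ) (k : ℕ),
      Finite {c : ℕ × ℕ // c.2 < m.getD c.1 0 ∧ T c.1 c.2 = k} := by
    intro T k
    refine Set.Finite.subset
      (Finset.finite_toSet (Finset.range m.length ×ˢ Finset.range m.sum)) ?_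
    rintro ⟨i, j⟩ ⟨h1, h2⟩
    have := hlen i
    have := hsum i
    simp only [Finset.coe_product, Finset.coe_range, Set.mem_prod, Set.mem_Iio] at *
    omega
  have hbd : ∀ T, HasContent m T ν → ∀ i j, j < m.getD i 0 → T i j < ν.length := by
    intro T hT i j hj
    by_contra hcon
    have h1 := hT (T i j)
    rw [List.getD_eq_getElem?_getD (l := ν), List.getElem?_eq_none (by omega)] at h1
    have := hfin T (T i j)
    have h2 := Finite.card_eq_zero_iff.1 h1
    exact h2.elim ⟨(i, j), hj, rfl⟩
  refine Finite.of_injective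
    (fun (T : {T : ℕ → ℕ → ℕ // IsSSYT m T ∧ HasContent m T ν})
      (i : Fin m.length) (j : Fin m.sum) =>
      (⟨min (T.1 i j) ν.length, by omega⟩ : Fin (ν.length + 1))) ?_
  intro T U h
  apply Subtype.ext
  funext i j
  by_cases hj : j < m.getD i 0
  · have hi : i < m.length := by
      by_contra hcon
      rw [hlen i (by omega)] at hj
      omega
    have hj' : j < m.sum := lt_of_lt_of_le hj (hsum i)
    have e := congrFun (congrFun h ⟨i, hi⟩) ⟨j, hj'⟩
    simp only [Fin.mk.injEq] at e
    have := hbd _ T.2.2 i j hj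
    have := hbd _ U.2.2 i j hj
    omega
  · rw [T.2.1.2.2 i j (by omega), U.2.1.2.2 i j (by omega)]

lemma kostka_le {A B p : ℕ} {l m : List ℕ} (S : Shapes A B p l m) (ν : List ℕ) :
    kostka l ν ≤ kostka m ν := by
  have hcolA : ∀ T, IsSSYT l T → ∀ i j, i < j → j < A → T i p < T j p := by
    intro T hT i j hij hj
    apply hT.2.1 i j p hij
    by_cases h : j < B
    · have := S.l1 j h; omega
    · have := S.l2 j (by omega) hj; omega
  have hcolB : ∀ T, IsSSYT l T → ∀ i j, i < j → j < B → T i (p + 1) < T j (p + 1) := by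
    intro T hT i j hij hj
    apply hT.2.1 i j (p + 1) hij
    have := S.l1 j hj; omega
  have hzA : ∀ T, IsSSYT l T → ∀ i, A ≤ i → T i p = 0 :=
    fun T hT i hi => hT.2.2 i p (S.l3 i hi)
  have hzB : ∀ T, IsSSYT l T → ∀ i, B ≤ i → T i (p + 1) = 0 := by
    intro T hT i hi
    apply hT.2.2 i (p + 1)
    by_cases h : i < A
    · have := S.l2 i hi h; omega
    · have := S.l3 i (by omega); omega
  have hex : ∀ T : {T : ℕ → ℕ → ℕ // IsSSYT l T ∧ HasContent l T ν}, ∃ q : ℕ × ℕ,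
      Good A B (fun i => T.1 i p) (fun i => T.1 i (p + 1)) q.1 q.2 := by
    intro T
    obtain ⟨r, k, h⟩ := exists_good A B (fun i => T.1 i p) (fun i => T.1 i (p + 1)) S.hAB
      (hcolA _ T.2.1) (hcolB _ T.2.1)
    exact ⟨(r, k), h⟩
  choose q hq using hex
  have := finite_ssyt m ν
  refine Nat.card_le_card_of_injective
    (fun T : {T : ℕ → ℕ → ℕ // IsSSYT l T ∧ HasContent l T ν} =>
      (⟨move A B p T.1 (q T).1 (q T).2, move_ssyt S T.2.1 (hq T), move_content S (hq T) T.2.2⟩ :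
        {T : ℕ → ℕ → ℕ // IsSSYT m T ∧ HasContent m T ν})) ?_
  intro T U h
  have h' := congrArg Subtype.val h
  apply Subtype.ext
  exact move_inj S.hAB (hcolA _ T.2.1) (hcolA _ U.2.1) (hzA _ T.2.1) (hzA _ U.2.1)
    (hzB _ T.2.1) (hzB _ U.2.1) (hq T) (hq U) h'

lemma shapes (n c β : ℕ) (pre suf : List ℕ) (hc : 1 ≤ c)
    (hβ : pre.length + 2 ≤ β)
    (hpre : ∀ x ∈ pre, c < x) (hsuf : ∀ x ∈ suf, x < c)
    (hlam : IsPartitionOf n (pre ++ List.replicate β c ++ suf)) :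
    Shapes (pre.length + β) pre.length (c - 1) (pre ++ List.replicate β c ++ suf)
      (movedShape c β pre suf) := by
  have hL : ∀ i, (pre ++ List.replicate β c ++ suf).getD i 0 =
      if i < pre.length then pre.getD i 0 else if i < pre.length + β then c
      else suf.getD (i - pre.length - β) 0 := by
    intro i
    simp only [List.getD_eq_getElem?_getD, List.getElem?_append, List.getElem?_replicate,
      List.length_append, List.length_replicate]
    split_ifs <;> first | omega | rfl | (congr 2; omega)
  have hf : ∀ i, (((c - 1) :: suf).filter (fun x => x ≠ 0)).getD i 0 =
      ((c - 1) :: suf).getD i 0 := by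
    intro i
    have hs : suf.filter (fun x => x ≠ 0) = suf := by
      rw [List.filter_eq_self]
      intro x hx
      have := hlam.2.1 x (by simp [hx])
      simp
      omega
    by_cases h : c = 1
    · have : suf = [] := by
        apply List.eq_nil_iff_forall_not_mem.2
        intro x hx
        have := hlam.2.1 x (by simp [hx])
        have := hsuf x hx
        omega
      subst this h
      cases i <;> simp
    · rw [List.filter_cons_of_pos (by simp; omega), hs]
  have hM : ∀ i, (movedShape c β pre suf).getD i 0 =
      if i < pre.length then pre.getD i 0 else if i = pre.length then c + 1
      else if i < pre.length + β - 1 then c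
      else ((c - 1) :: suf).getD (i - pre.length - (β - 1)) 0 := by
    intro i
    rw [← hf]
    unfold movedShape
    simp only [List.getD_eq_getElem?_getD, List.getElem?_append, List.getElem?_cons,
      List.getElem?_replicate, List.length_replicate]
    split_ifs <;> first | omega | rfl | (congr 2; omega)
  have hpre' : ∀ i < pre.length, c < pre.getD i 0 := by
    intro i hi
    rw [List.getD_eq_getElem _ _ hi]
    exact hpre _ (List.getElem_mem hi)
  have hsuf' : ∀ i, suf.getD i 0 < c := by
    intro i
    by_cases hi : i < suf.length
    · rw [List.getD_eq_getElem _ _ hi]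
      exact hsuf _ (List.getElem_mem hi)
    · rw [List.getD_eq_getElem?_getD, List.getElem?_eq_none (by omega)]
      exact hc
  refine ⟨?_, ?_, ?_, ?_, ?_, ?_, ?_, by omega⟩
  · intro i j hij
    rcases eq_or_lt_of_le hij with rfl | hij
    · exact le_rfl
    by_cases hj : j < (pre ++ List.replicate β c ++ suf).length
    · rw [List.getD_eq_getElem _ _ hj, List.getD_eq_getElem _ _ (hij.trans hj)]
      exact List.pairwise_iff_getElem.1 hlam.1 i j _ _ hij
    · rw [List.getD_eq_getElem?_getD, List.getElem?_eq_none (by omega)]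
      exact Nat.zero_le _
  · intro i hi
    rw [hL, if_pos hi]
    have := hpre' i hi
    omega
  · intro i h1 h2
    rw [hL, if_neg (by omega), if_pos h2]
    omega
  · intro i hi
    rw [hL, if_neg (by omega), if_neg (by omega)]
    have := hsuf' (i - pre.length - β)
    omega
  · rw [hM, if_neg (by omega), if_pos rfl]
    omega
  · rw [hM, if_neg (by omega), if_neg (by omega), if_neg (by omega),
      (by omega : pre.length + β - 1 - pre.length - (β - 1) = 0)]
    rfl
  · intro i h1 h2
    rw [hM, hL]
    split_ifs <;> first | omega | rfl | skip
    obtain ⟨d, hd⟩ : ∃ d, i - pre.length - (β - 1) = d + 1 :=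
      ⟨i - pre.length - β, by omega⟩
    rw [hd, (by omega : i - pre.length - β = d)]
    rfl

end MovedBox

/-- For `λ = (pre, c^β, suf)` with `β ≥ α + 2` (where `α` is the
number of parts of `pre`, all parts of `pre` exceed `c`, and all parts of `suf`
are less than `c`), and `μ` obtained by moving a box from the last row of the
block of `c`'s to its first row, we have `K_{λ,ν} ≤ K_{μ,ν}` for every partition
`ν` of `n`; in particular `λ ≤_I μ`. -/
theorem kostka_le_of_moved_box_zero (n c α β : ℕ) (pre suf : List ℕ) (hc : 1 ≤ c)
    (hα : pre.length = α) (hβ : α + 2 ≤ β)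
    (hpre : ∀ x ∈ pre, c < x) (hsuf : ∀ x ∈ suf, x < c)
    (hlam : IsPartitionOf n (pre ++ List.replicate β c ++ suf)) :
    (∀ ν, IsPartitionOf n ν →
        kostka (pre ++ List.replicate β c ++ suf) ν ≤ kostka (movedShape c β pre suf) ν) ∧
      ImmersionLE n (pre ++ List.replicate β c ++ suf) (movedShape c β pre suf) := by
  have S := MovedBox.shapes n c β pre suf hc (by omega) hpre hsuf hlam
  exact ⟨fun ν _ => MovedBox.kostka_le S ν, fun ν _ => MovedBox.kostka_le S ν⟩
end

section
/- Let c ≥ 1, α ≥ 2, β = α + 1, and let λ = (λ_1, …, λ_α, c^β, λ_{α+β+1}, …) be a partition of n with λ_{α+β+1} < c < λ_α. Let μ = (λ_1, …, λ_α, c+1, c^{β−2}, c−1, λ_{α+β+1}, …). Then K_{λ,ν} ≤ K_{μ,ν} for every partition ν of n; in particular λ ≤_I μ in the immersion poset. -/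
open Finset MvPolynomial

/-- number of elements of `S` below `x` -/
def cntBelow (S : Finset ℕ) (x : ℕ) : ℕ := #{y ∈ S | y < x}

/-- ballot `k`-subsets of `range N` -/
def ballotSets (k N : ℕ) : Finset (Finset ℕ) :=
  ((range N).powersetCard k).filter
    (fun P : Finset ℕ => ∀ t : Fin (N + 1), 2 * cntBelow P t.1 ≤ t.1)

/-- ballot supersets with one more element -/
def ballotUp (k N : ℕ) (P : Finset ℕ) : Finset (Finset ℕ) :=
  {Q ∈ ballotSets (k + 1) N | P ⊆ Q}

theorem mem_ballotSets {k N : ℕ} {P : Finset ℕ} :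
    P ∈ ballotSets k N ↔ (∀ x ∈ P, x < N) ∧ #P = k ∧ ∀ t ≤ N, 2 * cntBelow P t ≤ t := by
  simp only [ballotSets, mem_filter, mem_powersetCard, mem_range, subset_iff]
  constructor
  · rintro ⟨⟨a, b⟩, c⟩
    exact ⟨a, b, fun t ht => c ⟨t, by omega⟩⟩
  · rintro ⟨a, b, c⟩
    exact ⟨⟨a, b⟩, fun t => c t.1 (by omega)⟩

theorem cntBelow_insert_of_le {P : Finset ℕ} {x t : ℕ} (h : t ≤ x) :
    cntBelow (insert x P) t = cntBelow P t := by
  unfold cntBelow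
  rw [filter_insert, if_neg (by omega)]

theorem cntBelow_insert_of_lt {P : Finset ℕ} {x t : ℕ} (hx : x ∉ P) (h : x < t) :
    cntBelow (insert x P) t = cntBelow P t + 1 := by
  unfold cntBelow
  rw [filter_insert, if_pos h, card_insert_of_notMem (by simp [hx])]

theorem cntBelow_mono {P Q : Finset ℕ} (h : P ⊆ Q) (t : ℕ) : cntBelow P t ≤ cntBelow Q t :=
  card_le_card (filter_subset_filter _ h)

theorem cntBelow_add_ge (P : Finset ℕ) (t : ℕ) : cntBelow P t + #{y ∈ P | t ≤ y} = #P := by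
  unfold cntBelow
  rw [← card_filter_add_card_filter_not (s := P) (fun y => y < t)]
  simp

theorem cntBelow_all {P : Finset ℕ} {N : ℕ} (h : ∀ x ∈ P, x < N) : cntBelow P N = #P := by
  unfold cntBelow
  rw [filter_true_of_mem h]

theorem ballot_deg {k β : ℕ} (hβ : 3 ≤ β) {P : Finset ℕ} (hP : P ∈ ballotSets k (2 * k + β)) :
    ∃ m, (∀ y, y ∉ P → insert y P ∈ ballotSets (k + 1) (2 * k + β) → m ≤ y) ∧
      β - 1 + #{y ∈ P | m ≤ y} ≤ #(ballotUp k (2 * k + β) P) := by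
  obtain ⟨hlt, hcard, hb⟩ := mem_ballotSets.1 hP
  let pr : ℕ → Prop := fun t => t ≤ 2 * cntBelow P t + 1
  have hpr0 : pr 0 := Nat.zero_le _
  set N := 2 * k + β with hN
  set m := Nat.findGreatest pr N with hm
  have hmp : pr m := Nat.findGreatest_spec (P := pr) (Nat.zero_le N) hpr0
  have hmN : m ≤ N := Nat.findGreatest_le N
  have hgt : ∀ t, m < t → t ≤ N → 2 * cntBelow P t + 2 ≤ t := by
    intro t h1 h2
    have := Nat.findGreatest_is_greatest (P := pr) h1 h2
    simp only [pr] at this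
    omega
  refine ⟨m, ?_, ?_⟩
  · intro y hy hins
    obtain ⟨h1, h2, h3⟩ := mem_ballotSets.1 hins
    by_contra hlt'
    have := h3 m hmN
    rw [cntBelow_insert_of_lt hy (by omega)] at this
    simp only [pr] at hmp
    omega
  · have hX : #{x ∈ Ico m N | x ∉ P} ≤ #(ballotUp k N P) := by
      apply card_le_card_of_injOn (fun x => insert x P)
      · intro x hx
        simp only [coe_filter, mem_Ico, Set.mem_ofPred_eq] at hx
        simp only [ballotUp, coe_filter, Set.mem_ofPred_eq]
        refine ⟨mem_ballotSets.2 ⟨?_, ?_, ?_⟩, subset_insert _ _⟩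
        · intro z hz
          rcases mem_insert.1 hz with rfl | hz
          · exact hx.1.2
          · exact hlt z hz
        · rw [card_insert_of_notMem hx.2, hcard]
        · intro t ht
          by_cases h : t ≤ x
          · rw [cntBelow_insert_of_le h]; exact hb t ht
          · rw [cntBelow_insert_of_lt hx.2 (by omega)]
            have := hgt t (by omega) ht
            omega
      · intro x hx y hy hxy
        simp only [coe_filter, mem_Ico, Set.mem_ofPred_eq] at hx hy
        have : x ∈ insert y P := by rw [← show insert x P = insert y P from hxy]; simp
        rcases mem_insert.1 this with h | h
        · exact h
        · exact absurd h hx.2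
    have hsplit : #{x ∈ Ico m N | x ∈ P} + #{x ∈ Ico m N | x ∉ P} = N - m := by
      rw [card_filter_add_card_filter_not, Nat.card_Ico]
    have heq : ({x ∈ Ico m N | x ∈ P} : Finset ℕ) = {y ∈ P | m ≤ y} := by
      ext x
      simp only [mem_filter, mem_Ico]
      constructor
      · rintro ⟨⟨a, b⟩, c⟩; exact ⟨c, a⟩
      · rintro ⟨a, b⟩; exact ⟨⟨b, hlt x a⟩, a⟩
    rw [heq] at hsplit
    have h3 := cntBelow_add_ge P m
    simp only [pr] at hmp
    omega

theorem sum_rank (Q : Finset ℕ) (f : ℕ → ℚ) :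
    ∑ y ∈ Q, f #{z ∈ Q | y < z} = ∑ j ∈ range #Q, f j := by
  induction Q using Finset.induction_on_min with
  | empty => simp
  | insert a s ha ih =>
    have hna : a ∉ s := fun h => lt_irrefl _ (ha a h)
    rw [sum_insert hna, card_insert_of_notMem hna, sum_range_succ, ← ih, add_comm]
    congr 1
    · apply sum_congr rfl
      intro y hy
      congr 2
      rw [filter_insert, if_neg (by have := ha y hy; omega)]
    · congr 2
      rw [filter_insert, if_neg (lt_irrefl _), filter_true_of_mem ha]

theorem harm_bound {k β : ℕ} (h3 : 3 ≤ β) (h : k + 1 < β ∨ (k + 1 = β ∧ 4 ≤ β)) :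
    ∑ j ∈ range (k + 1), (1 : ℚ) / ((β - 1 + j : ℕ) : ℚ) ≤ 1 := by
  rcases h with h | ⟨h, h4⟩
  · have hb : (0 : ℚ) < ((β - 1 : ℕ) : ℚ) := by exact_mod_cast (by omega : 0 < β - 1)
    calc ∑ j ∈ range (k + 1), (1 : ℚ) / ((β - 1 + j : ℕ) : ℚ)
        ≤ ∑ j ∈ range (k + 1), (1 : ℚ) / ((β - 1 : ℕ) : ℚ) := by
          apply sum_le_sum
          intro j _
          apply one_div_le_one_div_of_le hb
          exact_mod_cast Nat.le_add_right _ _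
      _ = (k + 1 : ℕ) / ((β - 1 : ℕ) : ℚ) := by
          rw [sum_const, card_range, nsmul_eq_mul]; ring
      _ ≤ 1 := by
          rw [div_le_one hb]
          exact_mod_cast (by omega : k + 1 ≤ β - 1)
  · obtain ⟨b, rfl⟩ : ∃ b, β = b + 4 := ⟨β - 4, by omega⟩
    obtain rfl : k = b + 3 := by omega
    have h1 : ∑ j ∈ range (b + 2), (1 : ℚ) / ((b + 4 - 1 + (j + 1 + 1) : ℕ) : ℚ)
        ≤ (b + 2) / (b + 5) := by
      calc _ ≤ ∑ j ∈ range (b + 2), (1 : ℚ) / (b + 5) := by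
            apply sum_le_sum
            intro j _
            apply one_div_le_one_div_of_le (by positivity)
            have : b + 5 ≤ b + 4 - 1 + (j + 1 + 1) := by omega
            exact_mod_cast this
        _ = _ := by
          rw [sum_const, card_range, nsmul_eq_mul]; push_cast; ring
    rw [show b + 3 + 1 = b + 2 + 1 + 1 by ring, sum_range_succ', sum_range_succ']
    have e1 : ((b + 4 - 1 + (0 + 1) : ℕ) : ℚ) = b + 4 := by
      rw [show b + 4 - 1 + (0 + 1) = b + 4 by omega]; push_cast; ring
    have e2 : ((b + 4 - 1 + 0 : ℕ) : ℚ) = b + 3 := by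
      rw [show b + 4 - 1 + 0 = b + 3 by omega]; push_cast; ring
    rw [e1, e2]
    have h2 : ((b : ℚ) + 2) / (b + 5) + 1 / (b + 4) + 1 / (b + 3) ≤ 1 := by
      rw [div_add_div _ _ (by positivity) (by positivity),
        div_add_div _ _ (by positivity) (by positivity), div_le_one (by positivity)]
      have : (0 : ℚ) ≤ b := by positivity
      nlinarith [sq_nonneg (b : ℚ)]
    linarith

theorem ballot_inj_gen {k β : ℕ} (h3 : 3 ≤ β) (h : k + 1 < β ∨ (k + 1 = β ∧ 4 ≤ β)) :
    ∃ φ : Finset ℕ → Finset ℕ, Set.InjOn φ (ballotSets k (2 * k + β)) ∧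
      ∀ P ∈ ballotSets k (2 * k + β), φ P ∈ ballotUp k (2 * k + β) P := by
  classical
  set N := 2 * k + β with hN
  let t : {P // P ∈ ballotSets k N} → Finset (Finset ℕ) := fun P => ballotUp k N P.1
  have hpos : ∀ P ∈ ballotSets k N, (0 : ℚ) < #(ballotUp k N P) := by
    intro P hP
    obtain ⟨m, _, hm⟩ := ballot_deg h3 hP
    rw [← hN] at hm
    have : 0 < #(ballotUp k N P) := by omega
    exact_mod_cast this
  have hall : ∀ s : Finset {P // P ∈ ballotSets k N}, #s ≤ #(s.biUnion t) := by
    intro s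
    have key : (#s : ℚ) ≤ #(s.biUnion t) := by
      calc (#s : ℚ) = ∑ P ∈ s, ∑ Q ∈ t P, (1 : ℚ) / #(t P) := by
            rw [card_eq_sum_ones, Nat.cast_sum]
            apply sum_congr rfl
            intro P _
            rw [sum_const, nsmul_eq_mul, mul_one_div, div_self (hpos P.1 P.2).ne']
            simp
        _ = ∑ Q ∈ s.biUnion t, ∑ P ∈ s with Q ∈ t P, (1 : ℚ) / #(t P) := by
            apply sum_comm'
            intro P Q
            simp only [mem_biUnion, mem_filter]
            constructor
            · rintro ⟨a, b⟩; exact ⟨⟨a, b⟩, P, a, b⟩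
            · rintro ⟨⟨a, b⟩, _⟩; exact ⟨a, b⟩
        _ ≤ ∑ Q ∈ s.biUnion t, (1 : ℚ) := by
            apply sum_le_sum
            intro Q hQ
            obtain ⟨P0, _, hQ0⟩ := mem_biUnion.1 hQ
            have hQb : Q ∈ ballotSets (k + 1) N := (mem_filter.1 hQ0).1
            have hQb' := mem_ballotSets.1 hQb
            have step1 : ∑ P ∈ s with Q ∈ t P, (1 : ℚ) / #(t P) ≤
                ∑ y ∈ Q, (1 : ℚ) / #(ballotUp k N (Q.erase y)) := by
              rw [← sum_image (s := Q) (g := fun y => Q.erase y)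
                (f := fun P => (1 : ℚ) / #(ballotUp k N P))
                (fun a ha b hb hab => (Finset.erase_injOn Q) ha hb hab)]
              rw [← sum_image (s := {P ∈ s | Q ∈ t P}) (g := Subtype.val)
                (f := fun P => (1 : ℚ) / #(ballotUp k N P)) (by
                  intro a _ b _ hab; exact Subtype.ext hab)]
              apply sum_le_sum_of_subset_of_nonneg
              · intro P hP
                obtain ⟨P', hP', rfl⟩ := mem_image.1 hP
                have hsub : P'.1 ⊆ Q := (mem_filter.1 (mem_filter.1 hP').2).2
                have hc := (mem_ballotSets.1 P'.2).2.1
                have hd : #(Q \ P'.1) = 1 := by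
                  rw [card_sdiff_of_subset hsub, hQb'.2.1, hc]; omega
                obtain ⟨y, hy⟩ := card_eq_one.1 hd
                refine mem_image.2 ⟨y, ?_, ?_⟩
                · have : y ∈ Q \ P'.1 := by rw [hy]; simp
                  exact (mem_sdiff.1 this).1
                · rw [erase_eq, ← hy, _root_.sdiff_sdiff_eq_self hsub]
              · intros; positivity
            refine step1.trans ?_
            calc ∑ y ∈ Q, (1 : ℚ) / #(ballotUp k N (Q.erase y))
                ≤ ∑ y ∈ Q, (1 : ℚ) / ((β - 1 + #{z ∈ Q | y < z} : ℕ) : ℚ) := by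
                  apply sum_le_sum
                  intro y hy
                  apply one_div_le_one_div_of_le
                  · exact_mod_cast (by omega : 0 < β - 1 + #{z ∈ Q | y < z})
                  · have hPb : Q.erase y ∈ ballotSets k N := by
                      refine mem_ballotSets.2 ⟨fun x hx => hQb'.1 x (mem_of_mem_erase hx), ?_, ?_⟩
                      · rw [card_erase_of_mem hy, hQb'.2.1]; omega
                      · intro u hu
                        have := cntBelow_mono (erase_subset y Q) u
                        have := hQb'.2.2 u hu
                        omega
                    obtain ⟨m, hm1, hm2⟩ := ballot_deg h3 hPb
                    rw [← hN] at hm2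
                    have hmy : m ≤ y := hm1 y (notMem_erase y Q) (by rw [insert_erase hy]; exact hQb)
                    have : #{z ∈ Q | y < z} ≤ #{z ∈ Q.erase y | m ≤ z} := by
                      apply card_le_card
                      intro z hz
                      simp only [mem_filter, mem_erase] at hz ⊢
                      refine ⟨⟨by omega, hz.1⟩, by omega⟩
                    exact_mod_cast (by omega)
              _ = ∑ j ∈ range (k + 1), (1 : ℚ) / ((β - 1 + j : ℕ) : ℚ) := by
                  rw [sum_rank Q (fun j => (1 : ℚ) / ((β - 1 + j : ℕ) : ℚ)), hQb'.2.1]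
              _ ≤ 1 := harm_bound h3 h
        _ = #(s.biUnion t) := by simp
    exact_mod_cast key
  obtain ⟨f, hf, hft⟩ := (Finset.all_card_le_biUnion_card_iff_exists_injective t).1 hall
  refine ⟨fun P => if h : P ∈ ballotSets k N then f ⟨P, h⟩ else ∅, ?_, ?_⟩
  · intro P hP Q hQ hPQ
    have hP' : P ∈ ballotSets k N := hP
    have hQ' : Q ∈ ballotSets k N := hQ
    simp only [dif_pos hP', dif_pos hQ'] at hPQ
    exact congrArg Subtype.val (hf hPQ)
  · intro P hP
    simp only [dif_pos hP]
    exact hft ⟨P, hP⟩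

/-- explicit choice of the added element for `k = 2`, `β = 3`, encoded by the two elements -/
def specialElt (P : Finset ℕ) : ℕ :=
  if P = {1, 3} then 6 else if P = {1, 4} then 6 else if P = {1, 6} then 5
  else if P = {1, 5} then 4 else if P = {2, 6} then 3 else if P = {2, 4} then 6
  else if P = {2, 5} then 6 else if P = {4, 5} then 2 else if P = {4, 6} then 3
  else if P = {3, 6} then 5 else if P = {3, 4} then 5 else if P = {5, 6} then 4
  else if P = {2, 3} then 5 else 1

theorem ballot_inj_special :
    ∃ φ : Finset ℕ → Finset ℕ, Set.InjOn φ (ballotSets 2 7) ∧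
      ∀ P ∈ ballotSets 2 7, φ P ∈ ballotUp 2 7 P := by
  refine ⟨fun P => insert (specialElt P) P, ?_, ?_⟩
  · have : ∀ P ∈ ballotSets 2 7, ∀ Q ∈ ballotSets 2 7,
        insert (specialElt P) P = insert (specialElt Q) Q → P = Q := by decide +kernel
    intro P hP Q hQ h
    exact this P hP Q hQ h
  · decide +kernel

theorem ballot_inj {k β : ℕ} (h3 : 3 ≤ β) (h : k + 1 ≤ β) :
    ∃ φ : Finset ℕ → Finset ℕ, Set.InjOn φ (ballotSets k (2 * k + β)) ∧
      ∀ P ∈ ballotSets k (2 * k + β), φ P ∈ ballotUp k (2 * k + β) P := by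
  by_cases h' : k + 1 < β ∨ (k + 1 = β ∧ 4 ≤ β)
  · exact ballot_inj_gen h3 h'
  · obtain rfl : β = 3 := by omega
    obtain rfl : k = 2 := by omega
    exact ballot_inj_special

theorem cntBelow_union {S T : Finset ℕ} (h : Disjoint S T) (x : ℕ) :
    cntBelow (S ∪ T) x = cntBelow S x + cntBelow T x := by
  unfold cntBelow
  rw [filter_union, card_union_of_disjoint (disjoint_filter_filter h)]

theorem cntBelow_mono_right (S : Finset ℕ) {x y : ℕ} (h : x ≤ y) :
    cntBelow S x ≤ cntBelow S y := by
  apply card_le_card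
  intro z hz
  simp only [mem_filter] at hz ⊢
  exact ⟨hz.1, by omega⟩

theorem cntBelow_lt_of_mem {S : Finset ℕ} {u x : ℕ} (hu : u ∈ S) (h : u < x) :
    cntBelow S u < cntBelow S x := by
  apply card_lt_card
  rw [ssubset_iff_of_subset]
  · exact ⟨u, by simp [hu, h], by simp⟩
  · intro z hz
    simp only [mem_filter] at hz ⊢
    exact ⟨hz.1, by omega⟩

theorem rank_lt_iff {U : Finset ℕ} {u : ℕ} (hu : u ∈ U) (x : ℕ) :
    cntBelow U u < cntBelow U x ↔ u < x := by
  constructor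
  · intro h
    by_contra h'
    have := cntBelow_mono_right U (Nat.le_of_not_lt h')
    omega
  · exact cntBelow_lt_of_mem hu

theorem rank_injOn (U : Finset ℕ) : Set.InjOn (cntBelow U) (U : Set ℕ) := by
  intro a ha b hb h
  rcases lt_trichotomy a b with h1 | h1 | h1
  · have := cntBelow_lt_of_mem ha h1; omega
  · exact h1
  · have := cntBelow_lt_of_mem hb h1; omega

theorem rank_lt_card {U : Finset ℕ} {u : ℕ} (hu : u ∈ U) : cntBelow U u < #U := by
  apply card_lt_card
  rw [ssubset_iff_of_subset (filter_subset _ _)]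
  exact ⟨u, hu, by simp⟩

theorem rank_image (U : Finset ℕ) : U.image (cntBelow U) = range #U := by
  apply eq_of_subset_of_card_le
  · intro x hx
    obtain ⟨u, hu, rfl⟩ := mem_image.1 hx
    exact mem_range.2 (rank_lt_card hu)
  · rw [card_image_of_injOn (rank_injOn U), card_range]

theorem exists_rank {U : Finset ℕ} {t : ℕ} (ht : t ≤ #U) : ∃ x, cntBelow U x = t := by
  rcases Nat.lt_or_ge t #U with h | h
  · have : t ∈ U.image (cntBelow U) := by rw [rank_image]; exact mem_range.2 h
    obtain ⟨u, _, hu⟩ := mem_image.1 this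
    exact ⟨u, hu⟩
  · refine ⟨U.sup id + 1, ?_⟩
    rw [cntBelow_all]
    · omega
    · intro x hx
      have : id x ≤ U.sup id := le_sup hx
      simp only [id] at this
      omega

theorem cntBelow_image {U D : Finset ℕ} (hD : D ⊆ U) (x : ℕ) :
    cntBelow (D.image (cntBelow U)) (cntBelow U x) = cntBelow D x := by
  conv_lhs => unfold cntBelow
  rw [filter_image, card_image_of_injOn]
  · change #{a ∈ D | cntBelow U a < cntBelow U x} = #{y ∈ D | y < x}
    congr 1
    apply filter_congr
    intro u hu
    exact rank_lt_iff (hD hu) x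
  · intro a ha b hb hab
    have ha' : a ∈ U := hD (mem_filter.1 ha).1
    have hb' : b ∈ U := hD (mem_filter.1 hb).1
    exact rank_injOn U ha' hb' hab

theorem image_filter_rank {U Q : Finset ℕ} (hQ : ∀ x ∈ Q, x < #U) :
    ({u ∈ U | cntBelow U u ∈ Q} : Finset ℕ).image (cntBelow U) = Q := by
  ext q
  simp only [mem_image, mem_filter]
  constructor
  · rintro ⟨u, ⟨_, h⟩, rfl⟩; exact h
  · intro hq
    have : q ∈ U.image (cntBelow U) := by rw [rank_image]; exact mem_range.2 (hQ q hq)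
    obtain ⟨u, hu, rfl⟩ := mem_image.1 this
    exact ⟨u, ⟨hu, hq⟩, rfl⟩

/-- admissible pairs of columns -/
def GoodPair (β : ℕ) (p : Finset ℕ × Finset ℕ) : Prop :=
  #p.1 = #p.2 + β ∧ #p.2 + 1 ≤ β ∧ ∀ x, cntBelow p.2 x ≤ cntBelow p.1 x

theorem image_rank_inj {U D E : Finset ℕ} (hD : D ⊆ U) (hE : E ⊆ U)
    (h : D.image (cntBelow U) = E.image (cntBelow U)) : D = E := by
  have aux : ∀ {D E : Finset ℕ}, D ⊆ U → E ⊆ U →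
      D.image (cntBelow U) = E.image (cntBelow U) → D ⊆ E := by
    intro D E hD hE h d hd
    have : cntBelow U d ∈ E.image (cntBelow U) := h ▸ mem_image_of_mem _ hd
    obtain ⟨e, he, hed⟩ := mem_image.1 this
    rw [← rank_injOn U (hE he) (hD hd) hed]
    exact he
  exact Subset.antisymm (aux hD hE h) (aux hE hD h.symm)

set_option maxHeartbeats 1000000 in
theorem pair_inj {β : ℕ} (h3 : 3 ≤ β) :
    ∃ Φ : Finset ℕ × Finset ℕ → Finset ℕ × Finset ℕ,
      (∀ p q, GoodPair β p → GoodPair β q → Φ p = Φ q → p = q) ∧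
      ∀ p, GoodPair β p →
        (Φ p).1 ⊆ p.1 ∧ p.2 ⊆ (Φ p).2 ∧ #(Φ p).1 + 1 = #p.1 ∧ #(Φ p).2 = #p.2 + 1 ∧
        (∀ x, cntBelow (Φ p).2 x ≤ cntBelow (Φ p).1 x) ∧
        (Φ p).1 ∩ (Φ p).2 = p.1 ∩ p.2 ∧ (Φ p).1 ∪ (Φ p).2 = p.1 ∪ p.2 := by
  classical
  have hex : ∀ k, ∃ φ : Finset ℕ → Finset ℕ, k + 1 ≤ β →
      (Set.InjOn φ (ballotSets k (2 * k + β)) ∧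
      ∀ P ∈ ballotSets k (2 * k + β), φ P ∈ ballotUp k (2 * k + β) P) := by
    intro k
    by_cases h : k + 1 ≤ β
    · obtain ⟨φ, h1, h2⟩ := ballot_inj h3 h
      exact ⟨φ, fun _ => ⟨h1, h2⟩⟩
    · exact ⟨id, fun h' => absurd h' h⟩
  choose φ hφ using hex
  let U : Finset ℕ × Finset ℕ → Finset ℕ := fun p => (p.1 \ p.2) ∪ (p.2 \ p.1)
  let R : Finset ℕ × Finset ℕ → Finset ℕ := fun p => (p.2 \ p.1).image (cntBelow (U p))
  let D : Finset ℕ × Finset ℕ → Finset ℕ := fun p =>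
    {u ∈ U p | cntBelow (U p) u ∈ φ #(p.2 \ p.1) (R p)}
  let Φ : Finset ℕ × Finset ℕ → Finset ℕ × Finset ℕ := fun p =>
    ((p.1 ∩ p.2) ∪ (U p \ D p), (p.1 ∩ p.2) ∪ D p)
  have hsub : ∀ p, p.2 \ p.1 ⊆ U p := fun p => subset_union_right
  have hdisj : ∀ p : Finset ℕ × Finset ℕ, Disjoint (p.1 \ p.2) (p.2 \ p.1) := by
    intro p
    rw [disjoint_left]
    intro x hx hy
    exact (mem_sdiff.1 hx).2 (mem_sdiff.1 hy).1
  have hDU : ∀ p, D p ⊆ U p := fun p => filter_subset _ _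
  have hIU : ∀ p, Disjoint (p.1 ∩ p.2) (U p) := by
    intro p
    rw [disjoint_left]
    intro x hx hy
    simp only [U, mem_union, mem_sdiff, mem_inter] at hx hy
    tauto
  have split1 : ∀ (p : Finset ℕ × Finset ℕ) x,
      cntBelow p.1 x = cntBelow (p.1 ∩ p.2) x + cntBelow (p.1 \ p.2) x := by
    intro p x
    rw [← cntBelow_union]
    · congr 1; ext y; simp only [mem_union, mem_inter, mem_sdiff]; tauto
    · rw [disjoint_left]; intro y; simp only [mem_inter, mem_sdiff]; tauto
  have split2 : ∀ (p : Finset ℕ × Finset ℕ) x,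
      cntBelow p.2 x = cntBelow (p.1 ∩ p.2) x + cntBelow (p.2 \ p.1) x := by
    intro p x
    rw [← cntBelow_union]
    · congr 1; ext y; simp only [mem_union, mem_inter, mem_sdiff]; tauto
    · rw [disjoint_left]; intro y; simp only [mem_inter, mem_sdiff]; tauto
  have cardU : ∀ p, GoodPair β p → #(U p) = 2 * #(p.2 \ p.1) + β := by
    intro p hp
    have h1 : #(U p) = #(p.1 \ p.2) + #(p.2 \ p.1) := card_union_of_disjoint (hdisj p)
    have h2 := card_sdiff_add_card_inter p.1 p.2
    have h4 := card_sdiff_add_card_inter p.2 p.1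
    rw [inter_comm] at h4
    have := hp.1
    omega
  have cardk : ∀ p, GoodPair β p → #(p.2 \ p.1) + 1 ≤ β := by
    intro p hp
    have := hp.2.1
    have : #(p.2 \ p.1) ≤ #p.2 := card_le_card sdiff_subset
    omega
  have hR : ∀ p, GoodPair β p → R p ∈ ballotSets #(p.2 \ p.1) (2 * #(p.2 \ p.1) + β) := by
    intro p hp
    rw [← cardU p hp]
    refine mem_ballotSets.2 ⟨?_, ?_, ?_⟩
    · intro x hx
      obtain ⟨u, hu, rfl⟩ := mem_image.1 hx
      exact rank_lt_card (hsub p hu)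
    · exact card_image_of_injOn ((rank_injOn (U p)).mono (by exact_mod_cast hsub p))
    · intro t ht
      obtain ⟨x, rfl⟩ := exists_rank ht
      rw [cntBelow_image (hsub p)]
      have h1 : cntBelow (U p) x = _ := cntBelow_union (hdisj p) x
      have h2 := split1 p x
      have h4 := split2 p x
      have := hp.2.2 x
      omega
  have hQ : ∀ p, GoodPair β p → φ #(p.2 \ p.1) (R p) ∈ ballotUp #(p.2 \ p.1) #(U p) (R p) := by
    intro p hp
    rw [cardU p hp]
    exact (hφ _ (cardk p hp)).2 _ (hR p hp)
  have hQ1 : ∀ p, GoodPair β p → φ #(p.2 \ p.1) (R p) ∈ ballotSets (#(p.2 \ p.1) + 1) #(U p) :=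
    fun p hp => (mem_filter.1 (hQ p hp)).1
  have hQ2 : ∀ p, GoodPair β p → R p ⊆ φ #(p.2 \ p.1) (R p) :=
    fun p hp => (mem_filter.1 (hQ p hp)).2
  have hDim : ∀ p, GoodPair β p → (D p).image (cntBelow (U p)) = φ #(p.2 \ p.1) (R p) := by
    intro p hp
    exact image_filter_rank (mem_ballotSets.1 (hQ1 p hp)).1
  have hDcard : ∀ p, GoodPair β p → #(D p) = #(p.2 \ p.1) + 1 := by
    intro p hp
    rw [← (mem_ballotSets.1 (hQ1 p hp)).2.1, ← hDim p hp]
    exact (card_image_of_injOn ((rank_injOn (U p)).mono (by exact_mod_cast hDU p))).symm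
  have hsubD : ∀ p, GoodPair β p → p.2 \ p.1 ⊆ D p := by
    intro p hp x hx
    exact mem_filter.2 ⟨hsub p hx, hQ2 p hp (mem_image_of_mem _ hx)⟩
  have hinter : ∀ p, (Φ p).1 ∩ (Φ p).2 = p.1 ∩ p.2 := by
    intro p
    ext x
    have := @hDU p x
    have h2 : x ∈ p.1 ∩ p.2 → x ∉ U p := fun h => disjoint_left.1 (hIU p) h
    simp only [Φ, mem_inter, mem_union, mem_sdiff] at this h2 ⊢
    clear_value U D Φ
    tauto
  have hunion : ∀ p, (Φ p).1 ∪ (Φ p).2 = p.1 ∪ p.2 := by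
    intro p
    ext x
    have := @hDU p x
    simp only [Φ, U, mem_inter, mem_union, mem_sdiff] at this ⊢
    clear hsub hdisj hIU split1 split2 cardU cardk hR hQ hQ1 hQ2 hDim hDcard hsubD hinter hDU hφ
    tauto
  have hdiff : ∀ p, (Φ p).2 \ (Φ p).1 = D p := by
    intro p
    ext x
    have := @hDU p x
    have h2 : x ∈ p.1 ∩ p.2 → x ∉ U p := fun h => disjoint_left.1 (hIU p) h
    simp only [Φ, mem_inter, mem_union, mem_sdiff] at this h2 ⊢
    clear_value U D Φ
    tauto
  refine ⟨Φ, ?_, ?_⟩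
  · intro p q hp hq hpq
    have e1 : p.1 ∩ p.2 = q.1 ∩ q.2 := by rw [← hinter p, ← hinter q, hpq]
    have e2 : p.1 ∪ p.2 = q.1 ∪ q.2 := by rw [← hunion p, ← hunion q, hpq]
    have e3 : D p = D q := by rw [← hdiff p, ← hdiff q, hpq]
    have eU : U p = U q := by
      have aux : ∀ p : Finset ℕ × Finset ℕ, U p = (p.1 ∪ p.2) \ (p.1 ∩ p.2) := by
        intro p
        ext x
        simp only [U, mem_inter, mem_union, mem_sdiff]
        tauto
      rw [aux, aux, e1, e2]
    have ek : #(p.2 \ p.1) = #(q.2 \ q.1) := by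
      have h1 := hDcard p hp
      have h2 := hDcard q hq
      rw [e3] at h1
      omega
    have eQ : φ #(p.2 \ p.1) (R p) = φ #(p.2 \ p.1) (R q) := by
      rw [← hDim p hp, e3, eU, hDim q hq, ek]
    have eR : R p = R q := by
      apply (hφ _ (cardk p hp)).1 (hR p hp) _ eQ
      have := hR q hq
      rw [← ek] at this
      exact this
    have eD : p.2 \ p.1 = q.2 \ q.1 := by
      apply image_rank_inj (hsub p) (eU ▸ hsub q)
      change R p = _
      rw [eR, eU]
    have f2 : p.2 = q.2 := by
      ext x
      have h1 := Finset.ext_iff.1 eD x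
      have h2 := Finset.ext_iff.1 e1 x
      simp only [mem_sdiff, mem_inter] at h1 h2
      tauto
    have f1 : p.1 = q.1 := by
      ext x
      have h1 := Finset.ext_iff.1 e2 x
      have h2 := Finset.ext_iff.1 e1 x
      have h4 := Finset.ext_iff.1 eD x
      have h5 := Finset.ext_iff.1 f2 x
      simp only [mem_sdiff, mem_inter, mem_union] at h1 h2 h4
      tauto
    exact Prod.ext f1 f2
  · intro p hp
    have c1 : #(Φ p).1 = #(p.1 ∩ p.2) + (#(U p) - #(D p)) := by
      change #((p.1 ∩ p.2) ∪ (U p \ D p)) = _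
      rw [card_union_of_disjoint ((hIU p).mono_right sdiff_subset), card_sdiff_of_subset (hDU p)]
    have c2 : #(Φ p).2 = #(p.1 ∩ p.2) + #(D p) := by
      change #((p.1 ∩ p.2) ∪ D p) = _
      rw [card_union_of_disjoint ((hIU p).mono_right (hDU p))]
    have hDc := hDcard p hp
    have hUc := cardU p hp
    have h2 := card_sdiff_add_card_inter p.1 p.2
    have h4 := card_sdiff_add_card_inter p.2 p.1
    rw [inter_comm] at h4
    have h5 := hp.1
    refine ⟨?_, ?_, ?_, ?_, ?_, hinter p, hunion p⟩
    · intro x hx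
      by_cases hx2 : x ∈ p.2
      · rcases mem_union.1 hx with h | h
        · exact (mem_inter.1 h).1
        · have h' := mem_sdiff.1 h
          rcases mem_union.1 h'.1 with h6 | h6
          · exact (mem_sdiff.1 h6).1
          · exact absurd (hsubD p hp h6) h'.2
      · rcases mem_union.1 hx with h | h
        · exact (mem_inter.1 h).1
        · rcases mem_union.1 (mem_sdiff.1 h).1 with h6 | h6
          · exact (mem_sdiff.1 h6).1
          · exact absurd (mem_sdiff.1 h6).1 hx2
    · intro x hx
      by_cases hx1 : x ∈ p.1
      · exact mem_union_left _ (mem_inter.2 ⟨hx1, hx⟩)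
      · exact mem_union_right _ (hsubD p hp (mem_sdiff.2 ⟨hx, hx1⟩))
    · omega
    · omega
    · intro x
      have a1 : cntBelow (Φ p).1 x = cntBelow (p.1 ∩ p.2) x + cntBelow (U p \ D p) x :=
        cntBelow_union ((hIU p).mono_right sdiff_subset) x
      have a2 : cntBelow (Φ p).2 x = cntBelow (p.1 ∩ p.2) x + cntBelow (D p) x :=
        cntBelow_union ((hIU p).mono_right (hDU p)) x
      have a3 : cntBelow (U p) x = cntBelow (U p \ D p) x + cntBelow (D p) x := by
        rw [← cntBelow_union sdiff_disjoint, sdiff_union_of_subset (hDU p)]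
      have a4 := cntBelow_image (hDU p) x
      rw [hDim p hp] at a4
      have a5 := (mem_ballotSets.1 (hQ1 p hp)).2.2 (cntBelow (U p) x)
        (card_le_card (filter_subset _ _))
      omega

/-- the `i`-th smallest element of `S`, `0` if there is none -/
noncomputable def nthF (S : Finset ℕ) (i : ℕ) : ℕ := Nat.nth (fun x => x ∈ S) i

theorem cntBelow_eq_count (S : Finset ℕ) (x : ℕ) :
    Nat.count (fun y => y ∈ S) x = cntBelow S x := by
  rw [Nat.count_eq_card_filter_range, cntBelow]
  congr 1
  ext y
  simp only [mem_filter, mem_range]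
  tauto

theorem nthF_aux (S : Finset ℕ) (hf : (Set.ofPred (fun x => x ∈ S)).Finite) :
    #hf.toFinset = #S := by
  congr 1
  ext x
  simp

theorem nthF_fin (S : Finset ℕ) : (Set.ofPred (fun x => x ∈ S)).Finite := S.finite_toSet

theorem nthF_mem {S : Finset ℕ} {i : ℕ} (h : i < #S) : nthF S i ∈ S :=
  Nat.nth_mem_of_lt_card (nthF_fin S) (by rwa [nthF_aux])

theorem nthF_lt {S : Finset ℕ} {i j : ℕ} (hij : i < j) (h : j < #S) : nthF S i < nthF S j :=
  Nat.nth_lt_nth_of_lt_card (nthF_fin S) hij (by rwa [nthF_aux])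

theorem nthF_zero {S : Finset ℕ} {i : ℕ} (h : #S ≤ i) : nthF S i = 0 :=
  Nat.nth_of_card_le (nthF_fin S) (by rwa [nthF_aux])

theorem nthF_exists {S : Finset ℕ} {y : ℕ} (h : y ∈ S) : ∃ i < #S, nthF S i = y := by
  obtain ⟨n, hn, h'⟩ := Nat.exists_lt_card_finite_nth_eq (nthF_fin S) h
  exact ⟨n, by rwa [nthF_aux] at hn, h'⟩

theorem nthF_count {S : Finset ℕ} {i : ℕ} (h : i < #S) : cntBelow S (nthF S i + 1) = i + 1 := by
  rw [← cntBelow_eq_count]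
  exact Nat.count_nth_succ (fun hf => by rwa [nthF_aux])

theorem nthF_lt_of {S : Finset ℕ} {i x : ℕ} (h : i < cntBelow S x) : nthF S i < x := by
  rw [← cntBelow_eq_count] at h
  exact Nat.nth_lt_of_lt_count h

theorem nthF_dom {X Y : Finset ℕ} (h : ∀ x, cntBelow Y x ≤ cntBelow X x) {i : ℕ} (hi : i < #Y) :
    nthF X i ≤ nthF Y i := by
  have h1 := nthF_count hi
  have h2 := h (nthF Y i + 1)
  have : nthF X i < nthF Y i + 1 := nthF_lt_of (by omega)
  omega

theorem nthF_dom_conv {X Y : Finset ℕ} (hXY : #Y ≤ #X)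
    (h : ∀ i < #Y, nthF X i ≤ nthF Y i) (x : ℕ) : cntBelow Y x ≤ cntBelow X x := by
  rcases Nat.eq_zero_or_pos (cntBelow Y x) with h0 | h0
  · omega
  · have hle : cntBelow Y x ≤ #Y := card_le_card (filter_subset _ _)
    have h1 : nthF Y (cntBelow Y x - 1) < x := nthF_lt_of (by omega)
    have h2 := h (cntBelow Y x - 1) (by omega)
    have h3 := nthF_count (S := X) (i := cntBelow Y x - 1) (by omega)
    have h4 := cntBelow_mono_right X (show nthF X (cntBelow Y x - 1) + 1 ≤ x by omega)
    omega

theorem nthF_image {f : ℕ → ℕ} {m : ℕ} (hf : ∀ i j, i < j → j < m → f i < f j)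
    (h0 : ∀ i, m ≤ i → f i = 0) :
    #((range m).image f) = m ∧ ∀ i, nthF ((range m).image f) i = f i := by
  have hinj : Set.InjOn f (range m : Finset ℕ) := by
    intro a ha b hb hab
    have ha' : a < m := by simpa using ha
    have hb' : b < m := by simpa using hb
    rcases lt_trichotomy a b with h | h | h
    · have := hf a b h hb'; omega
    · exact h
    · have := hf b a h ha'; omega
  have hcard : #((range m).image f) = m := by rw [card_image_of_injOn hinj, card_range]
  refine ⟨hcard, fun i => ?_⟩
  rcases Nat.lt_or_ge i m with hi | hi
  · have hc : cntBelow ((range m).image f) (f i) = i := by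
      unfold cntBelow
      rw [filter_image, card_image_of_injOn (hinj.mono (by intro x hx; exact (mem_filter.1 hx).1))]
      have : ({a ∈ range m | f a < f i} : Finset ℕ) = range i := by
        ext a
        simp only [mem_filter, mem_range]
        constructor
        · rintro ⟨h1, h2⟩
          by_contra h3
          rcases Nat.lt_or_ge i a with h4 | h4
          · have := hf i a h4 h1; omega
          · have : a = i := by omega
            subst this; omega
        · intro h; exact ⟨by omega, hf a i h hi⟩
      rw [this, card_range]
    rw [← cntBelow_eq_count] at hc
    have hmem : f i ∈ (range m).image f := mem_image_of_mem _ (mem_range.2 hi)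
    have := Nat.nth_count (p := fun y => y ∈ (range m).image f) hmem
    rw [hc] at this
    exact this
  · rw [nthF_zero (by omega), h0 i hi]

theorem image_nthF (S : Finset ℕ) : (range #S).image (nthF S) = S := by
  ext y
  simp only [mem_image, mem_range]
  constructor
  · rintro ⟨i, hi, rfl⟩; exact nthF_mem hi
  · intro h; exact nthF_exists h

theorem encard_col (S : Finset ℕ) (j k : ℕ) :
    {x : ℕ × ℕ | x.2 = j ∧ x.1 < #S ∧ nthF S x.1 = k}.encard = if k ∈ S then 1 else 0 := by
  split_ifs with h
  · obtain ⟨i, hi, hk⟩ := nthF_exists h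
    rw [Set.encard_eq_one]
    refine ⟨(i, j), ?_⟩
    ext ⟨a, b⟩
    simp only [Set.mem_ofPred_eq, Set.mem_singleton_iff, Prod.mk.injEq]
    constructor
    · rintro ⟨h1, h2, h3⟩
      refine ⟨?_, h1⟩
      rcases lt_trichotomy a i with h4 | h4 | h4
      · have := nthF_lt h4 hi; omega
      · exact h4
      · have := nthF_lt h4 h2; omega
    · rintro ⟨rfl, rfl⟩; exact ⟨rfl, hi, hk⟩
  · rw [Set.encard_eq_zero, Set.eq_empty_iff_forall_notMem]
    rintro ⟨a, b⟩ ⟨_, h2, h3⟩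
    exact h (h3 ▸ nthF_mem h2)

theorem finite_cells (l : List ℕ) :
    {x : ℕ × ℕ | x.2 < l.getD x.1 0}.Finite := by
  apply Set.Finite.subset
    ((range l.length) ×ˢ (range ((range l.length).sup (fun i => l.getD i 0)))).finite_toSet
  rintro ⟨i, j⟩ h
  have h : j < l.getD i 0 := h
  have hi : i < l.length := by
    by_contra h'
    rw [List.getD_eq_default _ _ (by omega)] at h
    omega
  simp only [coe_product, Set.mem_prod, mem_coe, mem_range]
  exact ⟨hi, lt_of_lt_of_le h (le_sup (f := fun i => l.getD i 0) (mem_range.2 hi))⟩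

theorem finite_tab (l ν : List ℕ) :
    Finite {T : ℕ → ℕ → ℕ // IsSSYT l T ∧ HasContent l T ν} := by
  have := (finite_cells l).to_subtype
  have hbd : ∀ T, HasContent l T ν → ∀ i j, j < l.getD i 0 → T i j < ν.length := by
    intro T hT i j hij
    by_contra hlt
    have h := hT (T i j)
    rw [List.getD_eq_default _ _ (by omega)] at h
    have hfin : Finite {c : ℕ × ℕ // c.2 < l.getD c.1 0 ∧ T c.1 c.2 = T i j} :=
      ((finite_cells l).subset (fun x hx => hx.1) :
        {c : ℕ × ℕ | c.2 < l.getD c.1 0 ∧ T c.1 c.2 = T i j}.Finite).to_subtype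
    have hne : Nonempty {c : ℕ × ℕ // c.2 < l.getD c.1 0 ∧ T c.1 c.2 = T i j} :=
      ⟨⟨(i, j), hij, rfl⟩⟩
    have := Nat.card_pos (α := {c : ℕ × ℕ // c.2 < l.getD c.1 0 ∧ T c.1 c.2 = T i j})
    omega
  let F : {T : ℕ → ℕ → ℕ // IsSSYT l T ∧ HasContent l T ν} →
      ({x : ℕ × ℕ | x.2 < l.getD x.1 0} → Fin ν.length) :=
    fun T x => ⟨T.1 x.1.1 x.1.2, hbd T.1 T.2.2 _ _ x.2⟩
  apply Finite.of_injective F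
  intro S T hST
  apply Subtype.ext
  funext i j
  by_cases h : j < l.getD i 0
  · have := congrFun hST ⟨(i, j), h⟩
    exact congrArg Fin.val this
  · rw [S.2.1.2.2 i j (by omega), T.2.1.2.2 i j (by omega)]

theorem kostka_le_aux (l l' ν : List ℕ) (c α β : ℕ) (hc : 1 ≤ c) (hα : 2 ≤ α) (hβ : β = α + 1)
    (h1 : ∀ i, i < α → c < l.getD i 0)
    (h2 : ∀ i, α ≤ i → i < α + β → l.getD i 0 = c)
    (h3 : ∀ i, α + β ≤ i → l.getD i 0 < c)
    (h4 : ∀ i, i ≠ α → i ≠ α + β - 1 → l'.getD i 0 = l.getD i 0)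
    (h5 : l'.getD α 0 = c + 1) (h6 : l'.getD (α + β - 1) 0 = c - 1) :
    kostka l ν ≤ kostka l' ν := by
  classical
  obtain ⟨Φ, hΦinj, hΦ⟩ := pair_inj (β := β) (by omega)
  let A : (ℕ → ℕ → ℕ) → Finset ℕ := fun T => (range (α + β)).image (fun i => T i (c - 1))
  let B : (ℕ → ℕ → ℕ) → Finset ℕ := fun T => (range α).image (fun i => T i c)
  have hA : ∀ T, IsSSYT l T → #(A T) = α + β ∧ ∀ i, nthF (A T) i = T i (c - 1) := by
    intro T hT
    apply nthF_image
    · intro i j hij hj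
      apply hT.2.1 i j _ hij
      rcases Nat.lt_or_ge j α with h | h
      · have := h1 j h; omega
      · have := h2 j h hj; omega
    · intro i hi
      apply hT.2.2
      have := h3 i hi; omega
  have hB : ∀ T, IsSSYT l T → #(B T) = α ∧ ∀ i, nthF (B T) i = T i c := by
    intro T hT
    apply nthF_image
    · intro i j hij hj
      exact hT.2.1 i j _ hij (h1 j hj)
    · intro i hi
      apply hT.2.2
      rcases Nat.lt_or_ge i (α + β) with h | h
      · have := h2 i hi h; omega
      · have := h3 i h; omega
  have hgood : ∀ T, IsSSYT l T → GoodPair β (A T, B T) := by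
    intro T hT
    obtain ⟨a1, a2⟩ := hA T hT
    obtain ⟨b1, b2⟩ := hB T hT
    refine ⟨?_, ?_, ?_⟩
    · change #(A T) = #(B T) + β; omega
    · change #(B T) + 1 ≤ β; omega
    · apply nthF_dom_conv
      · change #(B T) ≤ #(A T); omega
      · intro i hi
        have hi : i < #(B T) := hi
        change nthF (A T) i ≤ nthF (B T) i
        rw [a2, b2]
        exact hT.1 i _ _ (by omega) (h1 i (by omega))
  let A' : (ℕ → ℕ → ℕ) → Finset ℕ := fun T => (Φ (A T, B T)).1
  let B' : (ℕ → ℕ → ℕ) → Finset ℕ := fun T => (Φ (A T, B T)).2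
  let G : (ℕ → ℕ → ℕ) → (ℕ → ℕ → ℕ) := fun T i j =>
    if j = c - 1 then nthF (A' T) i else if j = c then nthF (B' T) i else T i j
  have hcA : ∀ T i, G T i (c - 1) = nthF (A' T) i := by intro T i; simp [G]
  have hcB : ∀ T i, G T i c = nthF (B' T) i := by
    intro T i
    simp only [G]
    rw [if_neg (by omega)]; simp
  have hcO : ∀ T i j, j ≠ c - 1 → j ≠ c → G T i j = T i j := by
    intro T i j ha hb
    simp only [G]
    rw [if_neg ha, if_neg hb]
  have hA' : ∀ T, IsSSYT l T → #(A' T) = α + β - 1 := by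
    intro T hT
    have : #(A' T) + 1 = #(A T) := (hΦ _ (hgood T hT)).2.2.1
    have := (hA T hT).1
    omega
  have hB' : ∀ T, IsSSYT l T → #(B' T) = α + 1 := by
    intro T hT
    have : #(B' T) = #(B T) + 1 := (hΦ _ (hgood T hT)).2.2.2.1
    have := (hB T hT).1
    omega
  have leA : ∀ T, IsSSYT l T → ∀ i, i < α + β - 1 → T i (c - 1) ≤ nthF (A' T) i := by
    intro T hT i hi
    rw [← (hA T hT).2 i]
    apply nthF_dom
    · exact cntBelow_mono (hΦ _ (hgood T hT)).1
    · rw [hA' T hT]; exact hi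
  have leB : ∀ T, IsSSYT l T → ∀ i, i < α → nthF (B' T) i ≤ T i c := by
    intro T hT i hi
    rw [← (hB T hT).2 i]
    apply nthF_dom
    · exact cntBelow_mono (hΦ _ (hgood T hT)).2.1
    · rw [(hB T hT).1]; exact hi
  have leAB : ∀ T, IsSSYT l T → ∀ i, i < α + 1 → nthF (A' T) i ≤ nthF (B' T) i := by
    intro T hT i hi
    apply nthF_dom
    · exact (hΦ _ (hgood T hT)).2.2.2.2.1
    · rw [hB' T hT]; exact hi
  -- row lengths of the new shape
  have r1 : ∀ i, c - 1 < l'.getD i 0 ↔ i < α + β - 1 := by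
    intro i
    by_cases e1 : i = α
    · subst e1; omega
    by_cases e2 : i = α + β - 1
    · rw [e2]; omega
    rw [h4 i e1 e2]
    rcases Nat.lt_or_ge i α with h | h
    · have := h1 i h; omega
    rcases Nat.lt_or_ge i (α + β) with h' | h'
    · have := h2 i h h'; omega
    · have := h3 i h'; omega
  have r2 : ∀ i, c < l'.getD i 0 ↔ i < α + 1 := by
    intro i
    by_cases e1 : i = α
    · subst e1; omega
    by_cases e2 : i = α + β - 1
    · rw [e2]; omega
    rw [h4 i e1 e2]
    rcases Nat.lt_or_ge i α with h | h
    · have := h1 i h; omega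
    rcases Nat.lt_or_ge i (α + β) with h' | h'
    · have := h2 i h h'; omega
    · have := h3 i h'; omega
  have r3 : ∀ i j, j ≠ c - 1 → j ≠ c → (j < l'.getD i 0 ↔ j < l.getD i 0) := by
    intro i j ha hb
    by_cases e1 : i = α
    · subst e1
      have := h2 i (le_refl _) (by omega)
      omega
    by_cases e2 : i = α + β - 1
    · have := h2 i (by omega) (by omega)
      rw [e2] at this ⊢
      omega
    rw [h4 i e1 e2]
  have s1 : ∀ i, c - 1 < l.getD i 0 ↔ i < α + β := by
    intro i
    rcases Nat.lt_or_ge i α with h | h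
    · have := h1 i h; omega
    rcases Nat.lt_or_ge i (α + β) with h' | h'
    · have := h2 i h h'; omega
    · have := h3 i h'; omega
  have s2 : ∀ i, c < l.getD i 0 ↔ i < α := by
    intro i
    rcases Nat.lt_or_ge i α with h | h
    · have := h1 i h; omega
    rcases Nat.lt_or_ge i (α + β) with h' | h'
    · have := h2 i h h'; omega
    · have := h3 i h'; omega
  have hG : ∀ T, IsSSYT l T → IsSSYT l' (G T) := by
    intro T hT
    refine ⟨?_, ?_, ?_⟩
    · intro i
      have step : ∀ j, j + 1 < l'.getD i 0 → G T i j ≤ G T i (j + 1) := by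
        intro j hj
        by_cases e1 : j + 1 = c - 1
        · rw [e1, hcA, hcO T i j (by omega) (by omega)]
          have hi := (r1 i).1 (by omega)
          refine le_trans (hT.1 i j (c - 1) (by omega) ((s1 i).2 (by omega))) (leA T hT i hi)
        by_cases e2 : j + 1 = c
        · rw [show j = c - 1 by omega, show c - 1 + 1 = c by omega, hcA, hcB]
          exact leAB T hT i ((r2 i).1 (by omega))
        by_cases e3 : j = c
        · subst e3
          rw [hcB, hcO T i (j + 1) (by omega) (by omega)]
          have hj' := (r3 i (j + 1) (by omega) (by omega)).1 hj
          have hi : i < α := (s2 i).1 (by omega)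
          exact le_trans (leB T hT i hi) (hT.1 i j (j + 1) (by omega) hj')
        · rw [hcO T i j (by omega) e3, hcO T i (j + 1) e1 e2]
          exact hT.1 i j (j + 1) (by omega) ((r3 i (j + 1) e1 e2).1 hj)
      intro j1 j2 h12
      induction j2, h12 using Nat.le_induction with
      | base => intro _; exact le_refl _
      | succ j _ ih => intro hj; exact le_trans (ih (by omega)) (step j hj)
    · intro i1 i2 j h12 hj
      by_cases e1 : j = c - 1
      · subst e1
        rw [hcA, hcA]
        exact nthF_lt h12 (by rw [hA' T hT]; exact (r1 i2).1 hj)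
      by_cases e2 : j = c
      · subst e2
        rw [hcB, hcB]
        exact nthF_lt h12 (by rw [hB' T hT]; exact (r2 i2).1 hj)
      · rw [hcO T _ _ e1 e2, hcO T _ _ e1 e2]
        exact hT.2.1 i1 i2 j h12 ((r3 i2 j e1 e2).1 hj)
    · intro i j hj
      by_cases e1 : j = c - 1
      · subst e1
        rw [hcA]
        apply nthF_zero
        rw [hA' T hT]
        have := r1 i
        omega
      by_cases e2 : j = c
      · subst e2
        rw [hcB]
        apply nthF_zero
        rw [hB' T hT]
        have := r2 i
        omega
      · rw [hcO T _ _ e1 e2]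
        apply hT.2.2
        have := r3 i j e1 e2
        omega
  have hcont : ∀ T, IsSSYT l T → ∀ k,
      Nat.card {x : ℕ × ℕ // x.2 < l'.getD x.1 0 ∧ G T x.1 x.2 = k} =
      Nat.card {x : ℕ × ℕ // x.2 < l.getD x.1 0 ∧ T x.1 x.2 = k} := by
    intro T hT k
    let O : Set (ℕ × ℕ) := {x | x.2 ≠ c - 1 ∧ x.2 ≠ c ∧ x.2 < l.getD x.1 0 ∧ T x.1 x.2 = k}
    let C : Finset ℕ → ℕ → Set (ℕ × ℕ) := fun S j => {x | x.2 = j ∧ x.1 < #S ∧ nthF S x.1 = k}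
    have d1 : ∀ S S', Disjoint (C S (c - 1)) (C S' c) := by
      intro S S'
      rw [Set.disjoint_left]
      rintro x ⟨hx, _⟩ ⟨hy, _⟩
      omega
    have d2 : ∀ S S', Disjoint O (C S (c - 1) ∪ C S' c) := by
      intro S S'
      rw [Set.disjoint_left]
      rintro x ⟨hx, hx', _⟩ (⟨hy, _⟩ | ⟨hy, _⟩)
      · exact hx hy
      · exact hx' hy
    have en : ∀ S S', (O ∪ (C S (c - 1) ∪ C S' c)).encard =
        O.encard + ((if k ∈ S then 1 else 0) + (if k ∈ S' then 1 else 0)) := by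
      intro S S'
      rw [Set.encard_union_eq (d2 S S'), Set.encard_union_eq (d1 S S')]
      simp only [C]
      rw [encard_col, encard_col]
    have eT : {x : ℕ × ℕ | x.2 < l.getD x.1 0 ∧ T x.1 x.2 = k} =
        O ∪ (C (A T) (c - 1) ∪ C (B T) c) := by
      ext ⟨i, j⟩
      simp only [O, C, Set.mem_union, Set.mem_ofPred_eq, (hA T hT).1, (hA T hT).2, (hB T hT).1,
        (hB T hT).2]
      by_cases e1 : j = c - 1
      · have := s1 i
        subst e1
        have e : c - 1 ≠ c := by omega
        simp [-List.getD_eq_getElem?_getD, e, this]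
      by_cases e2 : j = c
      · have := s2 i
        subst e2
        simp [-List.getD_eq_getElem?_getD, e1, this]
      · simp [-List.getD_eq_getElem?_getD, e1, e2]
    have eG : {x : ℕ × ℕ | x.2 < l'.getD x.1 0 ∧ G T x.1 x.2 = k} =
        O ∪ (C (A' T) (c - 1) ∪ C (B' T) c) := by
      ext ⟨i, j⟩
      simp only [O, C, Set.mem_union, Set.mem_ofPred_eq, hA' T hT, hB' T hT]
      by_cases e1 : j = c - 1
      · have := r1 i
        subst e1
        have e : c - 1 ≠ c := by omega
        simp [-List.getD_eq_getElem?_getD, e, this, hcA]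
      by_cases e2 : j = c
      · have := r2 i
        subst e2
        simp [-List.getD_eq_getElem?_getD, e1, this, hcB]
      · have := r3 i j e1 e2
        simp [-List.getD_eq_getElem?_getD, e1, e2, this, hcO T i j e1 e2]
    have hk : ((if k ∈ A' T then 1 else 0) + (if k ∈ B' T then 1 else 0) : ℕ∞) =
        (if k ∈ A T then 1 else 0) + (if k ∈ B T then 1 else 0) := by
      have u1 := Finset.ext_iff.1 (hΦ _ (hgood T hT)).2.2.2.2.2.1 k
      have u2 := Finset.ext_iff.1 (hΦ _ (hgood T hT)).2.2.2.2.2.2 k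
      have u1' : (k ∈ A' T ∧ k ∈ B' T) ↔ (k ∈ A T ∧ k ∈ B T) := by
        simpa only [mem_inter] using u1
      have u2' : (k ∈ A' T ∨ k ∈ B' T) ↔ (k ∈ A T ∨ k ∈ B T) := by
        simpa only [mem_union] using u2
      by_cases v1 : k ∈ A' T <;> by_cases v2 : k ∈ B' T <;> by_cases v3 : k ∈ A T <;>
        by_cases v4 : k ∈ B T <;> simp only [v1, v2, v3, v4] at u1' u2' ⊢ <;> simp at u1' u2' ⊢
    have hfin : {x : ℕ × ℕ | x.2 < l'.getD x.1 0 ∧ G T x.1 x.2 = k}.encard =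
        {x : ℕ × ℕ | x.2 < l.getD x.1 0 ∧ T x.1 x.2 = k}.encard := by
      rw [eT, eG, en, en, hk]
    exact congrArg ENat.toNat hfin
  have hfin := finite_tab l' ν
  let F : {T : ℕ → ℕ → ℕ // IsSSYT l T ∧ HasContent l T ν} →
      {T : ℕ → ℕ → ℕ // IsSSYT l' T ∧ HasContent l' T ν} := fun T =>
    ⟨G T.1, hG T.1 T.2.1, fun k => (hcont T.1 T.2.1 k).trans (T.2.2 k)⟩
  apply Nat.card_le_card_of_injective F
  rintro ⟨S, hS, hS'⟩ ⟨T, hT, hT'⟩ hST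
  have hGG : G S = G T := congrArg Subtype.val hST
  apply Subtype.ext
  change S = T
  have eA : A' S = A' T := by
    rw [← image_nthF (A' S), ← image_nthF (A' T), hA' S hS, hA' T hT]
    congr 1
    funext i
    rw [← hcA, ← hcA, hGG]
  have eB : B' S = B' T := by
    rw [← image_nthF (B' S), ← image_nthF (B' T), hB' S hS, hB' T hT]
    congr 1
    funext i
    rw [← hcB, ← hcB, hGG]
  have ep := hΦinj _ _ (hgood S hS) (hgood T hT) (Prod.ext eA eB)
  have eA2 : A S = A T := congrArg Prod.fst ep
  have eB2 : B S = B T := congrArg Prod.snd ep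
  funext i j
  by_cases e1 : j = c - 1
  · rw [e1, ← (hA S hS).2, ← (hA T hT).2, eA2]
  by_cases e2 : j = c
  · rw [e2, ← (hB S hS).2, ← (hB T hT).2, eB2]
  · rw [← hcO S i j e1 e2, ← hcO T i j e1 e2, hGG]

/-- Same as Statement 9, but with `β = α + 1` and `α ≥ 2`. -/
theorem kostka_le_of_moved_box_one (n c α β : ℕ) (pre suf : List ℕ) (hc : 1 ≤ c)
    (hα : pre.length = α) (hα2 : 2 ≤ α) (hβ : β = α + 1)
    (hpre : ∀ x ∈ pre, c < x) (hsuf : ∀ x ∈ suf, x < c)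
    (hlam : IsPartitionOf n (pre ++ List.replicate β c ++ suf)) :
    (∀ ν, IsPartitionOf n ν →
        kostka (pre ++ List.replicate β c ++ suf) ν ≤ kostka (movedShape c β pre suf) ν) ∧
      ImmersionLE n (pre ++ List.replicate β c ++ suf) (movedShape c β pre suf) := by
  have gl : ∀ i, i < α → (pre ++ List.replicate β c ++ suf).getD i 0 = pre.getD i 0 := by
    intro i hi
    rw [List.append_assoc, List.getD_append _ _ _ _ (by omega)]
  have gm : ∀ i, α ≤ i → i < α + β → (pre ++ List.replicate β c ++ suf).getD i 0 = c := by
    intro i hi hi'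
    rw [List.getD_append _ _ _ _ (by simp; omega), List.getD_append_right _ _ _ _ (by omega)]
    rw [List.getD_eq_getElem _ _ (by simp; omega)]
    simp
  have gr : ∀ i, α + β ≤ i →
      (pre ++ List.replicate β c ++ suf).getD i 0 = suf.getD (i - (α + β)) 0 := by
    intro i hi
    rw [List.getD_append_right _ _ _ _ (by simp; omega)]
    congr 1
    simp [hα]
  have hpos : ∀ x ∈ suf, x ≠ 0 := fun x hx => by
    have := hlam.2.1 x (by simp [hx])
    omega
  have hm : ∀ i, α < i → (movedShape c β pre suf).getD i 0 =
      (List.replicate (β - 2) c ++ ((c - 1) :: suf).filter (fun x => x ≠ 0)).getD (i - α - 1) 0 := by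
    intro i hi
    unfold movedShape
    rw [List.getD_append_right _ _ _ _ (by omega), hα]
    obtain ⟨m, hm⟩ : ∃ m, i - α = m + 1 := ⟨i - α - 1, by omega⟩
    rw [hm, List.getD_cons_succ]
    rfl
  have hfil : ∀ m, (((c - 1) :: suf).filter (fun x => x ≠ 0)).getD m 0 =
      ((c - 1) :: suf).getD m 0 := by
    intro m
    have hs : suf.filter (fun x => x ≠ 0) = suf := by
      rw [List.filter_eq_self]
      intro x hx
      simp [hpos x hx]
    rcases Nat.lt_or_ge 1 c with h | h
    · rw [List.filter_cons, if_pos (by simp; omega), hs]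
    · have hc1 : c = 1 := by omega
      have hs0 : suf = [] := by
        rw [List.eq_nil_iff_forall_not_mem]
        intro x hx
        have := hpos x hx
        have := hsuf x hx
        omega
      subst hc1
      rw [hs0]
      cases m <;> simp
  have key : ∀ ν, kostka (pre ++ List.replicate β c ++ suf) ν ≤
      kostka (movedShape c β pre suf) ν := by
    intro ν
    apply kostka_le_aux _ _ ν c α β hc hα2 hβ
    · intro i hi
      rw [gl i hi, List.getD_eq_getElem _ _ (by omega)]
      exact hpre _ (List.getElem_mem _)
    · exact gm
    · intro i hi
      rw [gr i hi]
      rcases Nat.lt_or_ge (i - (α + β)) suf.length with h | h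
      · rw [List.getD_eq_getElem _ _ h]
        exact hsuf _ (List.getElem_mem _)
      · rw [List.getD_eq_default _ _ h]
        omega
    · intro i e1 e2
      rcases Nat.lt_or_ge i α with h | h
      · rw [gl i h]
        unfold movedShape
        rw [List.getD_append _ _ _ _ (by omega)]
      rw [hm i (by omega)]
      rcases Nat.lt_or_ge i (α + β) with h' | h'
      · rw [gm i h h', List.getD_append _ _ _ _ (by simp; omega),
          List.getD_eq_getElem _ _ (by simp; omega)]
        simp
      · rw [gr i h', List.getD_append_right _ _ _ _ (by simp; omega), hfil]
        rw [List.length_replicate, show i - α - 1 - (β - 2) = (i - (α + β)) + 1 by omega,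
          List.getD_cons_succ]
    · unfold movedShape
      rw [List.getD_append_right _ _ _ _ (by omega), hα]
      simp
    · rw [hm _ (by omega), List.getD_append_right _ _ _ _ (by simp; omega), hfil]
      rw [List.length_replicate, show α + β - 1 - α - 1 - (β - 2) = 0 by omega]
      simp
  exact ⟨fun ν _ => key ν, fun ν _ => key ν⟩
end

section
/- Let c ≥ 1, α ≥ 4, β = α, and let λ = (λ_1, …, λ_α, c^β, λ_{α+β+1}, …) be a partition of n with λ_{α+β+1} < c < λ_α. Let μ = (λ_1, …, λ_α, c+1, c^{β−2}, c−1, λ_{α+β+1}, …). Then K_{λ,ν} ≤ K_{μ,ν} for every partition ν of n; in particular λ ≤_I μ in the immersion poset. -/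
open Finset MvPolynomial

/-- Ballot numbers: nonnegative `±1` paths of length `s` from `0` to height `h`. -/
def ballotD : ℕ → ℕ → ℕ
  | 0, h => if h = 0 then 1 else 0
  | s + 1, 0 => ballotD s 1
  | s + 1, h + 1 => ballotD s h + ballotD s (h + 2)

theorem ballotD_closed (s : ℕ) : ∀ q h, 2 * q + h = s →
    ((ballotD s h : ℤ) = (s.choose q : ℤ) - (if q = 0 then 0 else (s.choose (q - 1) : ℤ))) := by
  induction s with
  | zero =>
    intro q h hs
    obtain rfl : q = 0 := by omega
    obtain rfl : h = 0 := by omega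
    simp [ballotD]
  | succ s ih =>
    intro q h hs
    rcases h with _ | h
    · rcases q with _ | _ | q
      · omega
      · obtain rfl : s = 1 := by omega
        simp [ballotD]
      · have h1 := ih (q + 1) 1 (by omega)
        have hsym : s.choose (q + 2) = s.choose (q + 1) := by
          rw [← Nat.choose_symm_of_eq_add (n := s) (a := q + 1) (b := q + 2) (by omega)]
        simp only [ballotD, h1]
        simp [Nat.choose_succ_succ, hsym]
    · rcases q with _ | q
      · have h1 := ih 0 h (by omega)
        have h2 : ∀ (s k : ℕ), s < k → ballotD s k = 0 := by
          intro s
          induction s with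
          | zero => intro k hk; simp [ballotD]; omega
          | succ s ih =>
            intro k hk
            rcases k with _ | k
            · omega
            · simp [ballotD, ih k (by omega), ih (k + 2) (by omega)]
        simp only [ballotD, h2 s (h + 2) (by omega)]
        push_cast
        rw [h1]; simp
      · have h1 := ih (q + 1) h (by omega)
        have h2 := ih q (h + 2) (by omega)
        simp only [ballotD]
        push_cast
        rw [h1, h2]
        rcases q with _ | q
        · simp [Nat.choose_succ_succ]
        · simp [Nat.choose_succ_succ]
          ring

theorem ballotD_lt (s : ℕ) : ∀ k, s < k → ballotD s k = 0 := by
  induction s with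
  | zero => intro k hk; simp [ballotD]; omega
  | succ s ih =>
    intro k hk
    rcases k with _ | k
    · omega
    · simp [ballotD, ih k (by omega), ih (k + 2) (by omega)]

theorem ballotD_le (s b : ℕ) (hb : 4 ≤ b) (hs : s ≤ 3 * b) (hpar : s % 2 = b % 2) :
    ballotD s b ≤ ballotD s (b - 2) := by
  rcases lt_or_ge s b with h | h
  · rw [ballotD_lt s b h]; omega
  obtain ⟨q, hq⟩ : ∃ q, 2 * q + b = s := ⟨(s - b) / 2, by omega⟩
  have h1 := ballotD_closed s q b hq
  have h2 := ballotD_closed s (q + 1) (b - 2) (by omega)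
  zify
  rw [h1, h2]
  simp only [Nat.add_sub_cancel, Nat.add_eq_zero_iff, one_ne_zero, and_false, if_false]
  have e1 : (s.choose (q + 1) : ℤ) * (q + 1) = s.choose q * (q + b) := by
    have := Nat.choose_succ_right_eq s q
    have h3 : s - q = q + b := by omega
    rw [h3] at this
    exact_mod_cast this
  have hc0 : (0 : ℤ) ≤ s.choose q := by positivity
  have hqb : (q : ℤ) ≤ b := by omega
  have hb' : (4 : ℤ) ≤ b := by omega
  rcases q with _ | q
  · simp at e1 ⊢
    have : s = b := by omega
    subst this
    omega
  · have e2 : (s.choose q : ℤ) * (q + b + 2) = s.choose (q + 1) * (q + 1) := by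
      have := Nat.choose_succ_right_eq s q
      have h3 : s - q = q + b + 2 := by omega
      rw [h3] at this
      exact_mod_cast this.symm
    simp only [Nat.add_sub_cancel, Nat.add_eq_zero_iff, one_ne_zero, and_false, if_false]
    push_cast at *
    set X : ℤ := ((s.choose (q + 1) : ℕ) : ℤ)
    set Y : ℤ := ((s.choose (q + 1 + 1) : ℕ) : ℤ)
    set Z : ℤ := ((s.choose q : ℕ) : ℤ)
    have hpos : (0 : ℤ) < (q + 2) * (q + b + 2) := by positivity
    suffices h : 0 ≤ (Y + Z - 2 * X) * ((q + 2) * (q + b + 2)) by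
      have := nonneg_of_mul_nonneg_left h hpos
      linarith
    have : (Y + Z - 2 * X) * ((q + 2) * (q + b + 2)) = X * (b * b - b - 2 * (q + 1) - 2) := by
      linear_combination ((q : ℤ) + b + 2) * e1 + ((q : ℤ) + 2) * e2
    rw [this]
    apply mul_nonneg hc0
    nlinarith

/-- Lattice paths controlled by step types `sg` and the constraint `ok`, frozen from time `K`. -/
def PathSet (sg : ℕ → Prop) (ok : ℕ → ℕ → Prop) (K h : ℕ) : Set (ℕ → ℕ) :=
  {f | f 0 = 0 ∧ (∀ x < K, (sg x → f (x + 1) = f x + 1 ∨ f x = f (x + 1) + 1) ∧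
      (¬ sg x → f (x + 1) = f x)) ∧ (∀ x ≤ K, ok x (f x)) ∧ ∀ x, K ≤ x → f x = h}

def extPath (x h : ℕ) (f : ℕ → ℕ) : ℕ → ℕ := fun y => if y ≤ x then f y else h

theorem extPath_injOn (sg : ℕ → Prop) (ok : ℕ → ℕ → Prop) (K h : ℕ) :
    Set.InjOn (extPath K h) (⋃ k, PathSet sg ok K k) := by
  intro f hf g hg hfg
  simp only [Set.mem_iUnion] at hf hg
  obtain ⟨k, hf⟩ := hf
  obtain ⟨k', hg⟩ := hg
  have key : ∀ y ≤ K, f y = g y := by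
    intro y hy
    have := congrFun hfg y
    simpa [extPath, hy] using this
  funext y
  rcases le_total y K with h | h
  · exact key y h
  · rw [hf.2.2.2 y h, hg.2.2.2 y h, ← hf.2.2.2 K le_rfl, ← hg.2.2.2 K le_rfl]
    exact key K le_rfl

theorem PathSet_succ (sg : ℕ → Prop) (ok : ℕ → ℕ → Prop) (K h : ℕ) (hok : ok (K + 1) h) :
    PathSet sg ok (K + 1) h = extPath K h '' {f | ∃ k, f ∈ PathSet sg ok K k ∧
      (sg K → h = k + 1 ∨ k = h + 1) ∧ (¬ sg K → h = k)} := by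
  ext f
  constructor
  · rintro ⟨h0, h1, h2, h3⟩
    refine ⟨fun y => f (min y K), ⟨f K, ⟨?_, ?_, ?_, ?_⟩, ?_, ?_⟩, ?_⟩
    · simpa using h0
    · intro x hx
      have := h1 x (by omega)
      simpa [min_eq_left (show x + 1 ≤ K by omega), min_eq_left hx.le] using this
    · intro x hx
      simpa [min_eq_left hx] using h2 x (by omega)
    · intro x hx
      simp [min_eq_right hx]
    · have := (h1 K (by omega)).1
      rwa [h3 (K + 1) le_rfl] at this
    · have := (h1 K (by omega)).2
      rwa [h3 (K + 1) le_rfl] at this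
    · funext y
      unfold extPath
      split_ifs with hy
      · simp [min_eq_left hy]
      · exact (h3 y (by omega)).symm
  · rintro ⟨g, ⟨k, ⟨h0, h1, h2, h3⟩, h4, h5⟩, rfl⟩
    refine ⟨?_, ?_, ?_, ?_⟩
    · simpa [extPath] using h0
    · intro x hx
      rcases Nat.lt_succ_iff_lt_or_eq.mp hx with hx | rfl
      · have := h1 x hx
        simpa [extPath, hx.le, Nat.succ_le_of_lt hx] using this
      · have := h3 x le_rfl
        simp only [extPath, le_refl, if_true, this]
        simpa using ⟨h4, h5⟩
    · intro x hx
      rcases Nat.le_succ_iff.mp hx with hx | rfl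
      · simpa [extPath, hx] using h2 x hx
      · simpa [extPath] using hok
    · intro x hx
      simp [extPath, show ¬ x ≤ K by omega]

theorem PathSet_not_ok (sg : ℕ → Prop) (ok : ℕ → ℕ → Prop) (K h : ℕ) (hok : ¬ ok K h) :
    PathSet sg ok K h = ∅ := by
  ext f
  simp only [Set.mem_empty_iff_false, iff_false]
  rintro ⟨_, _, h2, h3⟩
  have := h2 K le_rfl
  rw [h3 K le_rfl] at this
  exact hok this

theorem PathSet_disj (sg : ℕ → Prop) (ok : ℕ → ℕ → Prop) (K h k : ℕ) (hk : h ≠ k) :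
    Disjoint (PathSet sg ok K h) (PathSet sg ok K k) := by
  rw [Set.disjoint_left]
  intro f hf hg
  exact hk ((hf.2.2.2 K le_rfl).symm.trans (hg.2.2.2 K le_rfl))

theorem PathSet_succ_ns (sg : ℕ → Prop) (ok : ℕ → ℕ → Prop) (K h : ℕ) (hok : ok (K + 1) h)
    (hs : ¬ sg K) :
    PathSet sg ok (K + 1) h = extPath K h '' (PathSet sg ok K h) := by
  rw [PathSet_succ sg ok K h hok]
  congr 1
  ext f
  simp [hs]

theorem PathSet_succ_zero (sg : ℕ → Prop) (ok : ℕ → ℕ → Prop) (K : ℕ) (hok : ok (K + 1) 0)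
    (hs : sg K) :
    PathSet sg ok (K + 1) 0 = extPath K 0 '' (PathSet sg ok K 1) := by
  rw [PathSet_succ sg ok K 0 hok]
  congr 1
  ext f
  simp [hs]

theorem PathSet_succ_succ (sg : ℕ → Prop) (ok : ℕ → ℕ → Prop) (K h : ℕ)
    (hok : ok (K + 1) (h + 1)) (hs : sg K) :
    PathSet sg ok (K + 1) (h + 1) =
      extPath K (h + 1) '' (PathSet sg ok K h ∪ PathSet sg ok K (h + 2)) := by
  rw [PathSet_succ sg ok K (h + 1) hok]
  congr 1
  ext f
  simp only [hs, Set.mem_ofPred_eq, Set.mem_union, forall_const, not_true, false_imp_iff, and_true]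
  constructor
  · rintro ⟨k, hk, hkh | hkh⟩
    · obtain rfl : k = h := by omega
      exact Or.inl hk
    · subst hkh; exact Or.inr hk
  · rintro (h | h)
    · exact ⟨_, h, Or.inl rfl⟩
    · exact ⟨_, h, Or.inr rfl⟩

theorem PathSet_finite (sg : ℕ → Prop) (ok : ℕ → ℕ → Prop) (K : ℕ) :
    ∀ h, (PathSet sg ok K h).Finite := by
  induction K with
  | zero =>
    intro h
    apply Set.Finite.subset (Set.finite_singleton (fun _ : ℕ => 0))
    rintro f ⟨h0, _, _, h3⟩
    simp only [Set.mem_singleton_iff]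
    funext x
    rw [h3 x (Nat.zero_le _), ← h3 0 le_rfl, h0]
  | succ K ih =>
    intro h
    by_cases hok : ok (K + 1) h
    · by_cases hs : sg K
      · rcases h with _ | h
        · rw [PathSet_succ_zero _ _ _ hok hs]; exact (ih 1).image _
        · rw [PathSet_succ_succ _ _ _ _ hok hs]; exact ((ih _).union (ih _)).image _
      · rw [PathSet_succ_ns _ _ _ _ hok hs]; exact (ih _).image _
    · rw [PathSet_not_ok _ _ _ _ hok]; exact Set.finite_empty

theorem ncard_zero (sg : ℕ → Prop) (ok : ℕ → ℕ → Prop) (h : ℕ) (hh : h ≠ 0) :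
    (PathSet sg ok 0 h).ncard = 0 := by
  have : PathSet sg ok 0 h = ∅ := by
    ext f
    simp only [Set.mem_empty_iff_false, iff_false]
    rintro ⟨h0, _, _, h3⟩
    exact hh ((h3 0 le_rfl).symm.trans h0)
  simp [this]

theorem ncard_ns (sg : ℕ → Prop) (ok : ℕ → ℕ → Prop) (K h : ℕ) (hok : ok (K + 1) h)
    (hs : ¬ sg K) :
    (PathSet sg ok (K + 1) h).ncard = (PathSet sg ok K h).ncard := by
  rw [PathSet_succ_ns _ _ _ _ hok hs, Set.InjOn.ncard_image]
  exact (extPath_injOn sg ok K h).mono (Set.subset_iUnion (fun k => PathSet sg ok K k) _)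

theorem ncard_s_zero (sg : ℕ → Prop) (ok : ℕ → ℕ → Prop) (K : ℕ) (hok : ok (K + 1) 0)
    (hs : sg K) :
    (PathSet sg ok (K + 1) 0).ncard = (PathSet sg ok K 1).ncard := by
  rw [PathSet_succ_zero _ _ _ hok hs, Set.InjOn.ncard_image]
  exact (extPath_injOn sg ok K 0).mono (Set.subset_iUnion (fun k => PathSet sg ok K k) _)

theorem ncard_s_succ (sg : ℕ → Prop) (ok : ℕ → ℕ → Prop) (K h : ℕ) (hok : ok (K + 1) (h + 1))
    (hs : sg K) :
    (PathSet sg ok (K + 1) (h + 1)).ncard =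
      (PathSet sg ok K h).ncard + (PathSet sg ok K (h + 2)).ncard := by
  rw [PathSet_succ_succ _ _ _ _ hok hs, Set.InjOn.ncard_image,
    Set.ncard_union_eq (PathSet_disj _ _ _ _ _ (by omega)) (PathSet_finite _ _ _ _)
      (PathSet_finite _ _ _ _)]
  · exact (extPath_injOn sg ok K (h + 1)).mono (Set.union_subset
      (Set.subset_iUnion (fun k => PathSet sg ok K k) _)
      (Set.subset_iUnion (fun k => PathSet sg ok K k) _))

open Classical in
/-- Number of single steps before time `x`. -/
noncomputable def nsg (sg : ℕ → Prop) : ℕ → ℕ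
  | 0 => 0
  | x + 1 => nsg sg x + if sg x then 1 else 0

theorem path_le_ballot (sg : ℕ → Prop) (ok : ℕ → ℕ → Prop) (x : ℕ) :
    ∀ h, (PathSet sg ok x h).ncard ≤ ballotD (nsg sg x) h := by
  induction x with
  | zero =>
    intro h
    by_cases hh : h = 0
    · subst hh
      simp only [nsg, ballotD, if_true]
      rw [Set.ncard_le_one_iff_subset_singleton (PathSet_finite _ _ _ _)]
      refine ⟨fun _ => 0, ?_⟩
      rintro f ⟨_, _, _, h3⟩
      simp only [Set.mem_singleton_iff]
      funext x
      exact h3 x (Nat.zero_le _)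
    · rw [ncard_zero _ _ _ hh]; omega
  | succ x ih =>
    intro h
    by_cases hok : ok (x + 1) h
    · by_cases hs : sg x
      · simp only [nsg, hs, if_true]
        rcases h with _ | h
        · rw [ncard_s_zero _ _ _ hok hs]; exact ih 1
        · rw [ncard_s_succ _ _ _ _ hok hs]; exact Nat.add_le_add (ih _) (ih _)
      · simp only [nsg, hs, if_false]
        rw [ncard_ns _ _ _ _ hok hs]; exact ih h
    · rw [PathSet_not_ok _ _ _ _ hok]; simp

theorem path_mlr (sg : ℕ → Prop) (ok : ℕ → ℕ → Prop)
    (hdown : ∀ x i j, i ≤ j → ok x j → ok x i) (x : ℕ) :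
    ∀ i j, i ≤ j → i % 2 = j % 2 →
    (PathSet sg ok x j).ncard * ballotD (nsg sg x) i ≤
      (PathSet sg ok x i).ncard * ballotD (nsg sg x) j := by
  induction x with
  | zero =>
    intro i j hij _
    rcases hij.eq_or_lt with rfl | h
    · exact le_rfl
    · rw [ncard_zero _ _ j (by omega)]; simp
  | succ x ih =>
    intro i j hij hpar
    rcases hij.eq_or_lt with rfl | hlt
    · exact le_rfl
    by_cases hok : ok (x + 1) j
    · have hoki := hdown _ _ _ hij hok
      by_cases hs : sg x
      · simp only [nsg, hs, if_true]
        rcases j with _ | j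
        · omega
        rw [ncard_s_succ _ _ _ _ hok hs]
        rcases i with _ | i
        · rw [ncard_s_zero _ _ _ hoki hs]
          simp only [ballotD]
          have a := ih 1 j (by omega) (by omega)
          have b := ih 1 (j + 2) (by omega) (by omega)
          nlinarith
        · rw [ncard_s_succ _ _ _ _ hoki hs]
          simp only [ballotD]
          have a := ih i j (by omega) (by omega)
          have b := ih i (j + 2) (by omega) (by omega)
          have c := ih (i + 2) j (by omega) (by omega)
          have d := ih (i + 2) (j + 2) (by omega) (by omega)
          nlinarith
      · simp only [nsg, hs, if_false]
        rw [ncard_ns _ _ _ _ hok hs, ncard_ns _ _ _ _ hoki hs]; exact ih i j hij hpar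
    · rw [PathSet_not_ok _ _ _ _ hok]; simp

theorem path_main (sg : ℕ → Prop) (ok : ℕ → ℕ → Prop)
    (hdown : ∀ x i j, i ≤ j → ok x j → ok x i) (K b : ℕ) (hb : 4 ≤ b)
    (hs : nsg sg K ≤ 3 * b) (hpar : nsg sg K % 2 = b % 2) :
    (PathSet sg ok K b).ncard ≤ (PathSet sg ok K (b - 2)).ncard := by
  have h1 := path_mlr sg ok hdown K (b - 2) b (by omega) (by omega)
  have h2 := ballotD_le _ b hb hs hpar
  have h3 := path_le_ballot sg ok K b
  rcases Nat.eq_zero_or_pos (ballotD (nsg sg K) (b - 2)) with h | h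
  · omega
  · have := h1.trans (Nat.mul_le_mul_left _ h2)
    exact Nat.le_of_mul_le_mul_right this h

/-- Column-height chains encoding semistandard tableaux with column heights `g` and content `ν`. -/
def HSet (g : ℕ → ℕ) (ν : List ℕ) (W : ℕ) : Set (ℕ → ℕ → ℕ) :=
  {H | (∀ j, H 0 j = 0) ∧ (∀ x j, H x j ≤ H (x + 1) j ∧ H (x + 1) j ≤ H x j + 1) ∧
    (∀ x j, H x (j + 1) ≤ H x j) ∧ (∀ x, ν.length ≤ x → ∀ j, H x j = g j) ∧
    (∀ x, ∑ j ∈ range W, H (x + 1) j = ∑ j ∈ range W, H x j + ν.getD x 0)}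

theorem HSet_mono {g ν W H} (hH : H ∈ HSet g ν W) {x y : ℕ} (hxy : x ≤ y) (j : ℕ) :
    H x j ≤ H y j := by
  induction hxy with
  | refl => exact le_rfl
  | step _ ih => exact ih.trans (hH.2.1 _ j).1

theorem HSet_le {g ν W H} (hH : H ∈ HSet g ν W) (x j : ℕ) : H x j ≤ g j := by
  have := HSet_mono hH (le_max_left x ν.length) j
  rwa [hH.2.2.2.1 _ (le_max_right x ν.length) j] at this

theorem HSet_finite (g : ℕ → ℕ) (ν : List ℕ) (W : ℕ) (gW : ∀ j, W ≤ j → g j = 0) :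
    (HSet g ν W).Finite := by
  set G := ∑ j ∈ range W, g j
  let F : HSet g ν W → (Fin ν.length → Fin W → Fin (G + 1)) :=
    fun H x j => ⟨min (H.1 x j) G, by omega⟩
  have hF : Function.Injective F := by
    rintro ⟨H, hH⟩ ⟨H', hH'⟩ h
    apply Subtype.ext
    funext x j
    show H x j = H' x j
    rcases lt_or_ge x ν.length with hx | hx
    · rcases lt_or_ge j W with hj | hj
      · have h1 := congrArg Fin.val (congrFun (congrFun h ⟨x, hx⟩) ⟨j, hj⟩)
        simp only [F] at h1
        have h2 : g j ≤ G := Finset.single_le_sum (f := g) (fun _ _ => Nat.zero_le _)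
          (Finset.mem_range.2 hj)
        have h3 := HSet_le hH x j
        have h4 := HSet_le hH' x j
        omega
      · have h3 := HSet_le hH x j
        have h4 := HSet_le hH' x j
        have := gW j hj
        omega
    · rw [hH.2.2.2.1 x hx, hH'.2.2.2.1 x hx]
  exact Set.finite_coe_iff.mp (Finite.of_injective F hF)

theorem content_card (l : List ℕ) (g : ℕ → ℕ) (hg : ∀ i j, i < g j ↔ j < l.getD i 0) (W : ℕ)
    (gW : ∀ j, W ≤ j → g j = 0) (T H : ℕ → ℕ → ℕ)
    (key : ∀ i j x, i < g j → (T i j < x ↔ i < H x j)) (hle : ∀ x j, H x j ≤ g j) (k : ℕ) :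
    Nat.card {c : ℕ × ℕ // c.2 < l.getD c.1 0 ∧ T c.1 c.2 = k} =
      ∑ j ∈ range W, (H (k + 1) j - H k j) := by
  let s : Finset (ℕ × ℕ) := ((range W).sigma (fun j => Finset.Ico (H k j) (H (k + 1) j))).map
    ⟨fun x : (_ : ℕ) × ℕ => (x.2, x.1), by
      rintro ⟨a, b⟩ ⟨a', b'⟩ h
      simp only [Prod.mk.injEq] at h
      obtain ⟨rfl, rfl⟩ := h
      rfl⟩
  rw [Nat.subtype_card s]
  · simp [s]
  · rintro ⟨i, j⟩
    simp only [s, Finset.mem_map, Finset.mem_sigma, Finset.mem_range, Finset.mem_Ico]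
    rw [← hg]
    constructor
    · rintro ⟨⟨a, b⟩, ⟨_, h1, h2⟩, heq⟩
      obtain ⟨rfl, rfl⟩ := Prod.mk.inj heq
      simp only at h1 h2 ⊢
      have h3 : b < g a := lt_of_lt_of_le h2 (hle _ _)
      have h4 := key b a k h3
      have h5 := key b a (k + 1) h3
      refine ⟨h3, ?_⟩
      omega
    · rintro ⟨h3, h4⟩
      refine ⟨⟨j, i⟩, ⟨?_, ?_, ?_⟩, rfl⟩
      · by_contra hc
        simp only at hc
        have := gW j (by omega)
        omega
      · have := key i j k h3
        simp only; omega
      · have := key i j (k + 1) h3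
        simp only; omega

theorem filter_lower (s : ℕ) (p : ℕ → Prop) [DecidablePred p]
    (hp : ∀ a b, a ≤ b → b < s → p b → p a) (i : ℕ) :
    i < #((range s).filter p) ↔ i < s ∧ p i := by
  constructor
  · intro h
    by_contra hc
    have hsub : (range s).filter p ⊆ range i := by
      intro a ha
      simp only [Finset.mem_filter, Finset.mem_range] at ha ⊢
      by_contra hia
      exact hc ⟨by omega, hp i a (by omega) ha.1 ha.2⟩
    have := Finset.card_le_card hsub
    rw [Finset.card_range] at this
    omega
  · rintro ⟨h1, h2⟩
    have hsub : range (i + 1) ⊆ (range s).filter p := by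
      intro a ha
      simp only [Finset.mem_filter, Finset.mem_range] at ha ⊢
      exact ⟨by omega, hp a i (by omega) h1 h2⟩
    have := Finset.card_le_card hsub
    rw [Finset.card_range] at this
    omega

theorem exists_T_to_H (l ν : List ℕ) (g : ℕ → ℕ) (hg : ∀ i j, i < g j ↔ j < l.getD i 0) (W : ℕ)
    (gW : ∀ j, W ≤ j → g j = 0) :
    ∃ F : {T : ℕ → ℕ → ℕ // IsSSYT l T ∧ HasContent l T ν} → HSet g ν W,
      Function.Injective F := by
  let Hf : (ℕ → ℕ → ℕ) → ℕ → ℕ → ℕ := fun T x j => #{i ∈ range (g j) | T i j < x}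
  have key0 : ∀ T, IsSSYT l T → ∀ i j x, (i < Hf T x j ↔ i < g j ∧ T i j < x) := by
    intro T hT i j x
    refine filter_lower (g j) (fun i => T i j < x) ?_ i
    intro a b hab hb hx
    rcases hab.eq_or_lt with rfl | h
    · exact hx
    · exact (hT.2.1 a b j h ((hg b j).1 hb)).trans hx
  have hle : ∀ T x j, Hf T x j ≤ g j := by
    intro T x j
    exact (Finset.card_filter_le _ _).trans (by simp)
  refine ⟨fun T => ⟨Hf T.1, ?_⟩, ?_⟩
  · obtain ⟨T, hT, hC⟩ := T
    show Hf T ∈ HSet g ν W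
    have k0 := key0 T hT
    have hgmono : ∀ j, g (j + 1) ≤ g j := by
      intro j
      by_contra hc
      have := (hg (g j) (j + 1)).1 (by omega)
      have := (hg (g j) j).2 (by omega)
      omega
    have hcc := content_card l g hg W gW T (Hf T)
      (fun i j x hi => ⟨fun h => (k0 i j x).2 ⟨hi, h⟩, fun h => ((k0 i j x).1 h).2⟩) (hle T)
    have hmono : ∀ x j, Hf T x j ≤ Hf T (x + 1) j := by
      intro x j
      by_contra hc
      have h1 := (k0 (Hf T (x + 1) j) j x).1 (by omega)
      have := (k0 (Hf T (x + 1) j) j (x + 1)).2 ⟨h1.1, by omega⟩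
      omega
    refine ⟨?_, ?_, ?_, ?_, ?_⟩
    · intro j; simp [Hf]
    · intro x j
      refine ⟨hmono x j, ?_⟩
      by_contra hc
      have h1 := (k0 (Hf T x j + 1) j (x + 1)).1 (by omega)
      have h2 := hT.2.1 (Hf T x j) (Hf T x j + 1) j (by omega) ((hg _ _).1 h1.1)
      have h3 := (k0 (Hf T x j) j x).2 ⟨by omega, by omega⟩
      omega
    · intro x j
      by_contra hc
      have h1 := (k0 (Hf T x j) (j + 1) x).1 (by omega)
      have h2 := hT.1 (Hf T x j) j (j + 1) (by omega) ((hg _ _).1 h1.1)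
      have h3 := (k0 (Hf T x j) j x).2 ⟨lt_of_lt_of_le h1.1 (hgmono j), by omega⟩
      omega
    · intro x hx j
      by_contra hc
      have h0 := hle T x j
      have hlt : Hf T x j < g j := by omega
      have h1 : ¬ T (Hf T x j) j < x := by
        intro h
        have := (k0 (Hf T x j) j x).2 ⟨hlt, h⟩
        omega
      set i := Hf T x j
      set k := T i j with hk
      have h2 := hC k
      rw [hcc k, List.getD_eq_default _ _ (by omega), Finset.sum_eq_zero_iff] at h2
      have hjW : j < W := by
        by_contra hj
        have := gW j (by omega)
        omega
      have h3 := h2 j (Finset.mem_range.2 hjW)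
      have h4 := (k0 i j (k + 1)).2 ⟨hlt, by omega⟩
      have h5 := mt (k0 i j k).1 (by omega)
      omega
    · intro x
      have h2 := hC x
      rw [hcc x] at h2
      rw [← h2, ← Finset.sum_add_distrib]
      refine Finset.sum_congr rfl ?_
      intro j _
      have := hmono x j
      omega
  · rintro ⟨T, hT, hC⟩ ⟨T', hT', hC'⟩ h
    have h' : Hf T = Hf T' := congrArg Subtype.val h
    apply Subtype.ext
    funext i j
    show T i j = T' i j
    by_cases hij : i < g j
    · have h1 : ∀ x, T i j < x ↔ T' i j < x := by
        intro x
        have a := key0 T hT i j x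
        have b := key0 T' hT' i j x
        rw [h'] at a
        constructor
        · intro hx; exact (b.1 (a.2 ⟨hij, hx⟩)).2
        · intro hx; exact (a.1 (b.2 ⟨hij, hx⟩)).2
      have a := h1 (T i j + 1)
      have b := h1 (T' i j + 1)
      omega
    · have h2 : l.getD i 0 ≤ j := by
        rw [hg] at hij; omega
      rw [hT.2.2 i j h2, hT'.2.2 i j h2]

theorem exists_H_to_T (l ν : List ℕ) (g : ℕ → ℕ) (hg : ∀ i j, i < g j ↔ j < l.getD i 0) (W : ℕ)
    (gW : ∀ j, W ≤ j → g j = 0) :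
    ∃ F : HSet g ν W → {T : ℕ → ℕ → ℕ // IsSSYT l T ∧ HasContent l T ν},
      Function.Injective F := by
  let Tf : (ℕ → ℕ → ℕ) → ℕ → ℕ → ℕ := fun H i j => sInf {x | i < H (x + 1) j}
  have key0 : ∀ H, H ∈ HSet g ν W → ∀ i j x, i < g j → (Tf H i j < x ↔ i < H x j) := by
    intro H hH i j x hij
    have hne : {x | i < H (x + 1) j}.Nonempty := by
      refine ⟨ν.length, ?_⟩
      show i < H (ν.length + 1) j
      rw [hH.2.2.2.1 _ (by omega)]
      exact hij
    constructor
    · intro h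
      have h1 : i < H (Tf H i j + 1) j := Nat.sInf_mem hne
      exact lt_of_lt_of_le h1 (HSet_mono hH h j)
    · intro h
      rcases x with _ | x
      · rw [hH.1] at h; omega
      · have : Tf H i j ≤ x := Nat.sInf_le h
        omega
  refine ⟨fun H => ⟨Tf H.1, ?_, ?_⟩, ?_⟩
  · obtain ⟨H, hH⟩ := H
    have k0 := key0 H hH
    have hlj : ∀ x j1 j2, j1 ≤ j2 → H x j2 ≤ H x j1 := by
      intro x j1 j2 h
      induction h with
      | refl => exact le_rfl
      | step _ ih => exact (hH.2.2.1 x _).trans ih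
    refine ⟨?_, ?_, ?_⟩
    · intro i j1 j2 hj hl
      have h2 : i < g j2 := (hg _ _).2 hl
      have h1 : i < g j1 := (hg _ _).2 (by omega)
      show Tf H i j1 ≤ Tf H i j2
      have a := (k0 i j2 (Tf H i j2 + 1) h2).1 (by omega)
      have b := (k0 i j1 (Tf H i j2 + 1) h1).2 (lt_of_lt_of_le a (hlj _ _ _ hj))
      omega
    · intro i1 i2 j hi hl
      have h2 : i2 < g j := (hg _ _).2 hl
      show Tf H i1 j < Tf H i2 j
      have a := (k0 i2 j (Tf H i2 j + 1) h2).1 (by omega)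
      have b := (hH.2.1 (Tf H i2 j) j).2
      exact (k0 i1 j (Tf H i2 j) (by omega)).2 (by omega)
    · intro i j hl
      show sInf {x | i < H (x + 1) j} = 0
      have : {x | i < H (x + 1) j} = ∅ := by
        ext x
        simp only [Set.mem_ofPred_eq, Set.mem_empty_iff_false, iff_false]
        have h1 := HSet_le hH (x + 1) j
        have h2 := hg i j
        omega
      rw [this]; exact Nat.sInf_empty
  · obtain ⟨H, hH⟩ := H
    intro k
    rw [content_card l g hg W gW (Tf H) H (key0 H hH) (HSet_le hH) k]
    have h1 := hH.2.2.2.2 k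
    have h2 : ∑ j ∈ range W, H (k + 1) j =
        ∑ j ∈ range W, H k j + ∑ j ∈ range W, (H (k + 1) j - H k j) := by
      rw [← Finset.sum_add_distrib]
      refine Finset.sum_congr rfl ?_
      intro j _
      have := (hH.2.1 k j).1
      omega
    omega
  · rintro ⟨H, hH⟩ ⟨H', hH'⟩ h
    have h' : Tf H = Tf H' := congrArg Subtype.val h
    apply Subtype.ext
    funext x j
    show H x j = H' x j
    have a1 := HSet_le hH x j
    have a2 := HSet_le hH' x j
    rcases lt_trichotomy (H x j) (H' x j) with hl | hl | hl
    · have b1 := key0 H hH (H x j) j x (by omega)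
      have b2 := key0 H' hH' (H x j) j x (by omega)
      rw [h'] at b1
      omega
    · exact hl
    · have b1 := key0 H hH (H' x j) j x (by omega)
      have b2 := key0 H' hH' (H' x j) j x (by omega)
      rw [h'] at b1
      omega

/-- Merge the two columns `e` and `e + 1`, remembering only their total. -/
def restH (e : ℕ) (H : ℕ → ℕ → ℕ) : ℕ → ℕ → ℕ := fun x j =>
  if j = e then H x e + H x (e + 1) else if j = e + 1 then 0 else H x j

theorem restH_sum (e W : ℕ) (hW : e + 2 ≤ W) (H : ℕ → ℕ → ℕ) (x : ℕ) :
    ∑ j ∈ range W, restH e H x j = ∑ j ∈ range W, H x j := by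
  obtain ⟨t, rfl⟩ := Nat.exists_eq_add_of_le hW
  have hsplit : ∀ f : ℕ → ℕ, ∑ j ∈ range (e + 2 + t), f j =
      ∑ j ∈ range e, f j + f e + f (e + 1) + ∑ j ∈ range t, f (e + 2 + j) := by
    intro f
    rw [Finset.sum_range_add f (e + 2) t, Finset.sum_range_succ, Finset.sum_range_succ]
  rw [hsplit, hsplit]
  have h1 : ∑ j ∈ range e, restH e H x j = ∑ j ∈ range e, H x j := by
    refine Finset.sum_congr rfl ?_
    intro j hj
    rw [Finset.mem_range] at hj
    simp [restH, show j ≠ e by omega, show j ≠ e + 1 by omega]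
  have h2 : ∑ j ∈ range t, restH e H x (e + 2 + j) = ∑ j ∈ range t, H x (e + 2 + j) := by
    refine Finset.sum_congr rfl ?_
    intro j hj
    simp [restH, show e + 2 + j ≠ e by omega, show e + 2 + j ≠ e + 1 by omega]
  rw [h1, h2]
  simp [restH]
  ring

/-- Rebuild a chain from the merged data and the height path. -/
def splitH (e : ℕ) (R : ℕ → ℕ → ℕ) (f : ℕ → ℕ) : ℕ → ℕ → ℕ := fun x j =>
  if j = e then (R x e + f x) / 2 else if j = e + 1 then (R x e - f x) / 2 else R x j

theorem fiber_exists (g g' : ℕ → ℕ) (ν : List ℕ) (W e b : ℕ) (hb : 4 ≤ b) (hW : e + 2 ≤ W)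
    (h1 : g e = b + b) (h2 : g (e + 1) = b) (h1' : g' e = b + b - 1) (h2' : g' (e + 1) = b + 1)
    (hoth : ∀ j, j ≠ e → j ≠ e + 1 → g' j = g j) (R : ℕ → ℕ → ℕ) :
    ∃ F : {H : HSet g ν W // restH e H.1 = R} → {H : HSet g' ν W // restH e H.1 = R},
      Function.Injective F := by
  by_cases hne : Nonempty {H : HSet g ν W // restH e H.1 = R}
  swap
  · rw [not_nonempty_iff] at hne
    exact ⟨fun x => (hne.false x).elim, fun x => (hne.false x).elim⟩
  let K := ν.length
  let sg : ℕ → Prop := fun x => R (x + 1) e = R x e + 1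
  let ok : ℕ → ℕ → Prop := fun x h =>
    (∀ i, i + 1 = e → R x e + h ≤ 2 * R x i) ∧ 2 * R x (e + 2) + h ≤ R x e
  have hdown : ∀ x i j, i ≤ j → ok x j → ok x i := by
    rintro x i j hij ⟨a, b⟩
    refine ⟨fun k hk => ?_, by omega⟩
    have := a k hk
    omega
  have Re : ∀ H, restH e H = R → ∀ x, R x e = H x e + H x (e + 1) := by
    rintro H rfl x; simp [restH]
  have Re1 : ∀ H, restH e H = R → ∀ x, R x (e + 1) = 0 := by
    rintro H rfl x; simp [restH]
  have Ro : ∀ H, restH e H = R → ∀ x j, j ≠ e → j ≠ e + 1 → R x j = H x j := by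
    rintro H rfl x j ha hb; simp [restH, ha, hb]
  -- first map
  have m1 : ∀ H, H ∈ HSet g ν W → restH e H = R →
      (fun x => H x e - H x (e + 1)) ∈ PathSet sg ok K b := by
    intro H hH hR
    have re := Re H hR
    have ro := Ro H hR
    obtain ⟨a1, a2, a3, a4, a5⟩ := hH
    refine ⟨?_, ?_, ?_, ?_⟩
    · simp [a1]
    · intro x _
      have b1 := a2 x e
      have b2 := a2 x (e + 1)
      have b3 := a3 x e
      have b4 := a3 (x + 1) e
      simp only [sg, re]
      refine ⟨fun _ => ?_, fun _ => ?_⟩ <;> omega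
    · intro x _
      have b3 := a3 x e
      have b4 := a3 x (e + 1)
      refine ⟨?_, ?_⟩
      · rintro i rfl
        have b5 := a3 x i
        rw [re, ro x i (by omega) (by omega)]
        simp only; omega
      · rw [re, ro x (e + 2) (by omega) (by omega)]
        simp only
        have b6 : H x (e + 2) ≤ H x (e + 1) := b4
        omega
    · intro x hx
      simp only [a4 x hx, h1, h2]; omega
  obtain ⟨⟨⟨H0, hH0⟩, hR0⟩⟩ := hne
  simp only at hR0
  have re := Re H0 hR0
  have re1 := Re1 H0 hR0
  have ro := Ro H0 hR0
  have RK : ∀ x, K ≤ x → ∀ j, R x j = R K j := by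
    intro x hx j
    have e1 := hH0.2.2.2.1 x hx
    have e2 := hH0.2.2.2.1 K le_rfl
    rw [← hR0]
    simp only [restH, e1, e2]
  have RKe : ∀ x, K ≤ x → R x e = 3 * b := by
    intro x hx
    rw [re, hH0.2.2.2.1 x hx, hH0.2.2.2.1 x hx, h1, h2]; omega
  have R0 : ∀ j, R 0 j = 0 := by
    intro j
    rw [← hR0]
    simp [restH, hH0.1]
  have Rstep : ∀ x, R x e ≤ R (x + 1) e ∧ R (x + 1) e ≤ R x e + 2 := by
    intro x
    rw [re, re]
    have b1 := hH0.2.1 x e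
    have b2 := hH0.2.1 x (e + 1)
    omega
  -- second map
  have m2 : ∀ f, f ∈ PathSet sg ok K (b - 2) →
      splitH e R f ∈ HSet g' ν W ∧ restH e (splitH e R f) = R ∧
        (∀ x, f x = splitH e R f x e - splitH e R f x (e + 1)) := by
    rintro f ⟨f0, f1, f2, f3⟩
    have F1 : ∀ x, (sg x → f (x + 1) = f x + 1 ∨ f x = f (x + 1) + 1) ∧
        (¬ sg x → f (x + 1) = f x) := by
      intro x
      rcases lt_or_ge x K with hx | hx
      · exact f1 x hx
      · refine ⟨fun h => ?_, fun _ => ?_⟩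
        · simp only [sg] at h
          have e1 := RKe x hx
          have e2 := RKe (x + 1) (by omega)
          omega
        · rw [f3 x hx, f3 (x + 1) (by omega)]
    have F2 : ∀ x, ok x (f x) := by
      intro x
      rcases le_total x K with hx | hx
      · exact f2 x hx
      · have := f2 K le_rfl
        simp only [ok, RK x hx, f3 x hx] at this ⊢
        rwa [f3 K le_rfl] at this
    have F3 : ∀ x, f x % 2 = R x e % 2 := by
      intro x
      induction x with
      | zero => rw [f0, R0]
      | succ x ih =>
        have c1 := F1 x
        have c2 := Rstep x
        simp only [sg] at c1
        by_cases hs : R (x + 1) e = R x e + 1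
        · have := c1.1 hs
          omega
        · have := c1.2 hs
          omega
    have F4 : ∀ x, f x ≤ R x e := by
      intro x
      have := (F2 x).2
      omega
    have se : ∀ x, splitH e R f x e = (R x e + f x) / 2 := by intro x; simp [splitH]
    have se1 : ∀ x, splitH e R f x (e + 1) = (R x e - f x) / 2 := by intro x; simp [splitH]
    have so : ∀ x j, j ≠ e → j ≠ e + 1 → splitH e R f x j = R x j := by
      intro x j ha hb; simp [splitH, ha, hb]
    have hrest : restH e (splitH e R f) = R := by
      funext x j
      by_cases ha : j = e
      · subst ha
        simp only [restH, if_true, se, se1]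
        have := F3 x
        have := F4 x
        omega
      · by_cases hb : j = e + 1
        · subst hb
          simp [restH, re1]
        · simp [restH, ha, hb, so]
    refine ⟨⟨?_, ?_, ?_, ?_, ?_⟩, hrest, ?_⟩
    · intro j
      simp [splitH, R0, f0]
    · intro x j
      by_cases ha : j = e
      · subst ha
        rw [se, se]
        have c1 := F1 x
        have c2 := Rstep x
        have c3 := F3 x
        have c4 := F3 (x + 1)
        simp only [sg] at c1
        by_cases hs : R (x + 1) j = R x j + 1
        · have := c1.1 hs
          omega
        · have := c1.2 hs
          omega
      · by_cases hb : j = e + 1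
        · subst hb
          rw [se1, se1]
          have c1 := F1 x
          have c2 := Rstep x
          have c3 := F3 x
          have c4 := F3 (x + 1)
          have c5 := F4 x
          have c6 := F4 (x + 1)
          simp only [sg] at c1
          by_cases hs : R (x + 1) e = R x e + 1
          · have := c1.1 hs
            omega
          · have := c1.2 hs
            omega
        · rw [so _ _ ha hb, so _ _ ha hb, ro _ _ ha hb, ro _ _ ha hb]
          exact hH0.2.1 x j
    · intro x j
      by_cases ha : j = e
      · subst ha
        rw [se, se1]; omega
      by_cases hb : j = e + 1
      · subst hb
        rw [se1, so _ _ (by omega) (by omega)]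
        have := (F2 x).2
        have c3 := F3 x
        have h7 : R x (e + 1 + 1) = R x (e + 2) := rfl
        omega
      by_cases hc : j + 1 = e
      · subst hc
        rw [se, so _ _ (by omega) (by omega)]
        have := (F2 x).1 j rfl
        omega
      · rw [so _ _ ha hb, so _ _ hc (by omega), ro _ _ ha hb, ro _ _ hc (by omega)]
        exact hH0.2.2.1 x j
    · intro x hx j
      by_cases ha : j = e
      · subst ha
        rw [se, RKe x hx, f3 x hx, h1']; omega
      by_cases hb : j = e + 1
      · subst hb
        rw [se1, RKe x hx, f3 x hx, h2']; omega
      · rw [so _ _ ha hb, ro _ _ ha hb, hoth _ ha hb]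
        exact hH0.2.2.2.1 x hx j
    · intro x
      have hs : ∀ y, ∑ j ∈ range W, splitH e R f y j = ∑ j ∈ range W, H0 y j := by
        intro y
        rw [← restH_sum e W hW, hrest, ← restH_sum e W hW H0, hR0]
      rw [hs, hs]
      exact hH0.2.2.2.2 x
    · intro x
      rw [se, se1]
      have := F3 x
      have := F4 x
      omega
  have hn : ∀ x, nsg sg x ≤ R x e ∧ nsg sg x % 2 = R x e % 2 := by
    intro x
    induction x with
    | zero => simp [nsg, R0]
    | succ x ih =>
      have c2 := Rstep x
      by_cases hs : sg x
      · have hs' : R (x + 1) e = R x e + 1 := hs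
        simp only [nsg, hs, if_true]; omega
      · have hs' : ¬ R (x + 1) e = R x e + 1 := hs
        simp only [nsg, hs, if_false]; omega
  have hnK := hn K
  rw [RKe K le_rfl] at hnK
  have hmain := path_main sg ok hdown K b hb (by omega) (by omega)
  have hf1 := PathSet_finite sg ok K b
  have hf2 := PathSet_finite sg ok K (b - 2)
  have := hf1.fintype
  have := hf2.fintype
  rw [← Nat.card_coe_set_eq, ← Nat.card_coe_set_eq, Nat.card_eq_fintype_card,
    Nat.card_eq_fintype_card] at hmain
  obtain ⟨φ⟩ := Function.Embedding.nonempty_of_card_le hmain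
  let G1 : {H : HSet g ν W // restH e H.1 = R} → PathSet sg ok K b :=
    fun H => ⟨_, m1 H.1.1 H.1.2 H.2⟩
  let G2 : PathSet sg ok K (b - 2) → {H : HSet g' ν W // restH e H.1 = R} :=
    fun f => ⟨⟨splitH e R f.1, (m2 f.1 f.2).1⟩, (m2 f.1 f.2).2.1⟩
  have i1 : Function.Injective G1 := by
    rintro ⟨⟨H, hH⟩, hR⟩ ⟨⟨H', hH'⟩, hR'⟩ h
    have h := congrArg Subtype.val h
    simp only [G1] at h
    apply Subtype.ext
    apply Subtype.ext
    funext x j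
    show H x j = H' x j
    have c1 := congrFun h x
    have c2 := Re H hR x
    have c3 := Re H' hR' x
    have c4 := hH.2.2.1 x e
    have c5 := hH'.2.2.1 x e
    by_cases ha : j = e
    · subst ha; omega
    by_cases hb : j = e + 1
    · subst hb; omega
    · rw [← Ro H hR _ _ ha hb, Ro H' hR' _ _ ha hb]
  have i2 : Function.Injective G2 := by
    rintro ⟨f, hf⟩ ⟨f', hf'⟩ h
    have h : splitH e R f = splitH e R f' := congrArg (fun z => z.1.1) h
    apply Subtype.ext
    funext x
    show f x = f' x
    rw [(m2 f hf).2.2 x, (m2 f' hf').2.2 x, h]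
  exact ⟨G2 ∘ φ ∘ G1, i2.comp (φ.injective.comp i1)⟩

theorem HSet_card_le (g g' : ℕ → ℕ) (ν : List ℕ) (W e b : ℕ) (hb : 4 ≤ b) (hW : e + 2 ≤ W)
    (h1 : g e = b + b) (h2 : g (e + 1) = b) (h1' : g' e = b + b - 1) (h2' : g' (e + 1) = b + 1)
    (hoth : ∀ j, j ≠ e → j ≠ e + 1 → g' j = g j) :
    ∃ F : HSet g ν W → HSet g' ν W, Function.Injective F := by
  choose F hF using fiber_exists g g' ν W e b hb hW h1 h2 h1' h2' hoth
  refine ⟨fun H => (F (restH e H.1) ⟨H, rfl⟩).1, ?_⟩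
  intro H H' h
  simp only at h
  have a := (F (restH e H.1) ⟨H, rfl⟩).2
  have b := (F (restH e H'.1) ⟨H', rfl⟩).2
  have hr : restH e H.1 = restH e H'.1 := by rw [← a, ← b, h]
  have gen : ∀ R (hR : restH e H.1 = R) (hR' : restH e H'.1 = R),
      (F R ⟨H, hR⟩).1 = (F R ⟨H', hR'⟩).1 → H = H' := by
    intro R hR hR' hh
    have := hF R (Subtype.ext hh)
    exact congrArg Subtype.val this
  refine gen _ rfl hr.symm ?_
  rw [h]
  have gen2 : ∀ R R' (hR : restH e H'.1 = R) (hR' : restH e H'.1 = R'),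
      (F R ⟨H', hR⟩).1 = (F R' ⟨H', hR'⟩).1 := by
    rintro R R' rfl rfl; rfl
  exact gen2 _ _ _ _

theorem moved_getD_filter (c : ℕ) (suf : List ℕ) (hc : 1 ≤ c) (hsuf : ∀ x ∈ suf, x < c)
    (hpos : ∀ x ∈ suf, 0 < x) (k : ℕ) :
    (((c - 1) :: suf).filter (fun x => x ≠ 0)).getD k 0 = ((c - 1) :: suf).getD k 0 := by
  have hs : suf.filter (fun x => x ≠ 0) = suf := by
    rw [List.filter_eq_self]
    intro x hx
    have := hpos x hx
    simp; omega
  by_cases h : c = 1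
  · have : suf = [] := by
      rw [List.eq_nil_iff_forall_not_mem]
      intro x hx
      have a := hpos x hx
      have b := hsuf x hx
      omega
    subst this
    subst h
    rcases k with _ | k <;> simp
  · rw [List.filter_cons, hs]
    simp [show c - 1 ≠ 0 by omega]

/-- Same as Statement 9, but with `β = α` and `α ≥ 4`. -/
theorem kostka_le_of_moved_box_two (n c α β : ℕ) (pre suf : List ℕ) (hc : 1 ≤ c)
    (hα : pre.length = α) (hα4 : 4 ≤ α) (hβ : β = α)
    (hpre : ∀ x ∈ pre, c < x) (hsuf : ∀ x ∈ suf, x < c)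
    (hlam : IsPartitionOf n (pre ++ List.replicate β c ++ suf)) :
    (∀ ν, IsPartitionOf n ν →
        kostka (pre ++ List.replicate β c ++ suf) ν ≤ kostka (movedShape c β pre suf) ν) ∧
      ImmersionLE n (pre ++ List.replicate β c ++ suf) (movedShape c β pre suf) := by
  suffices h : ∀ ν, kostka (pre ++ List.replicate β c ++ suf) ν ≤
      kostka (movedShape c β pre suf) ν from ⟨fun ν _ => h ν, fun ν _ => h ν⟩
  intro ν
  subst hβ
  obtain ⟨hsort, hpos, -⟩ := hlam
  have hsufpos : ∀ x ∈ suf, 0 < x := fun x hx => hpos x (by simp [hx])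
  set l := pre ++ List.replicate β c ++ suf with hl
  set m := movedShape c β pre suf with hm
  -- entries of l
  have l1 : ∀ i, i < β → c < l.getD i 0 := by
    intro i hi
    rw [hl, List.append_assoc, List.getD_append _ _ _ _ (by omega),
      List.getD_eq_getElem _ _ (by omega)]
    exact hpre _ (List.getElem_mem _)
  have l2 : ∀ i, β ≤ i → i < β + β → l.getD i 0 = c := by
    intro i hi hi2
    rw [hl, List.append_assoc, List.getD_append_right _ _ _ _ (by omega),
      List.getD_append _ _ _ _ (by simp; omega), List.getD_replicate _ (by omega)]
  have l3 : ∀ i, β + β ≤ i → l.getD i 0 = suf.getD (i - (β + β)) 0 := by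
    intro i hi
    rw [hl, List.getD_append_right _ _ _ _ (by simp; omega)]
    simp [hα]
  have l4 : ∀ i, β + β ≤ i → l.getD i 0 < c := by
    intro i hi
    rw [l3 i hi]
    rcases lt_or_ge (i - (β + β)) suf.length with h | h
    · rw [List.getD_eq_getElem _ _ h]
      exact hsuf _ (List.getElem_mem _)
    · rw [List.getD_eq_default _ _ h]; omega
  -- entries of m
  have m1 : ∀ i, i < β → m.getD i 0 = l.getD i 0 := by
    intro i hi
    rw [hm, hl, movedShape, List.append_assoc, List.getD_append _ _ _ _ (by omega),
      List.getD_append _ _ _ _ (by omega)]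
  have m2 : m.getD β 0 = c + 1 := by
    rw [hm, movedShape, List.getD_append_right _ _ _ _ (by omega)]
    simp [hα]
  have mr : ∀ k, m.getD (β + 1 + k) 0 = (List.replicate (β - 2) c ++
      ((c - 1) :: suf).filter (fun x => x ≠ 0)).getD k 0 := by
    intro k
    rw [hm, movedShape, List.getD_append_right _ _ _ _ (by omega),
      show β + 1 + k - pre.length = k + 1 by omega, List.getD_cons_succ]
  have m3 : ∀ i, β < i → i < β + β - 1 → m.getD i 0 = c := by
    intro i hi hi2
    obtain ⟨k, rfl⟩ := Nat.exists_eq_add_of_lt hi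
    rw [show β + k + 1 = β + 1 + k by omega, mr, List.getD_append _ _ _ _ (by simp; omega),
      List.getD_replicate _ (by omega)]
  have m4 : ∀ k, m.getD (β + β - 1 + k) 0 = ((c - 1) :: suf).getD k 0 := by
    intro k
    rw [show β + β - 1 + k = β + 1 + (β - 2 + k) by omega, mr,
      List.getD_append_right _ _ _ _ (by simp)]
    rw [← moved_getD_filter c suf hc hsuf hsufpos k]
    simp
  have m5 : m.getD (β + β - 1) 0 = c - 1 := by
    have := m4 0
    simpa using this
  have m6 : ∀ i, β + β ≤ i → m.getD i 0 = l.getD i 0 := by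
    intro i hi
    rw [l3 i hi]
    have := m4 (i - (β + β) + 1)
    rw [show β + β - 1 + (i - (β + β) + 1) = i by omega, List.getD_cons_succ] at this
    exact this
  -- column heights
  let g : ℕ → ℕ := fun j => #{i ∈ range l.length | j < l.getD i 0}
  have hg : ∀ i j, i < g j ↔ j < l.getD i 0 := by
    intro i j
    have := filter_lower l.length (fun i => j < l.getD i 0) (by
      intro a b hab hb hj
      rcases hab.eq_or_lt with rfl | h
      · exact hj
      · rw [List.getD_eq_getElem _ _ hb] at hj
        rw [List.getD_eq_getElem _ _ (h.trans hb)]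
        exact lt_of_lt_of_le hj (List.pairwise_iff_getElem.1 hsort a b _ _ h)) i
    refine this.trans ⟨fun h => h.2, fun h => ⟨?_, h⟩⟩
    by_contra hc
    rw [List.getD_eq_default _ _ (by omega)] at h
    omega
  let g' : ℕ → ℕ := fun j => if j = c - 1 then β + β - 1 else if j = c then β + 1 else g j
  have gc1 : g (c - 1) = β + β := by
    have a := hg (β + β - 1) (c - 1)
    rw [l2 _ (by omega) (by omega)] at a
    have b := hg (β + β) (c - 1)
    have := l4 (β + β) le_rfl
    omega
  have gc : g c = β := by
    have a := hg (β - 1) c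
    have := l1 (β - 1) (by omega)
    have b := hg β c
    rw [l2 _ (by omega) (by omega)] at b
    omega
  have hg' : ∀ i j, i < g' j ↔ j < m.getD i 0 := by
    intro i j
    have hmi : m.getD i 0 = if i = β then c + 1 else if i = β + β - 1 then c - 1 else
        l.getD i 0 := by
      split_ifs with ha hb
      · rw [ha, m2]
      · rw [hb, m5]
      · rcases lt_or_ge i β with h | h
        · exact m1 i h
        · rcases lt_or_ge i (β + β) with h' | h'
          · rw [m3 i (by omega) (by omega), l2 i h h']
          · exact m6 i h'
    rw [hmi]
    have a1 := l1 i
    have a2 := l2 i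
    have a4 := l4 i
    have a5 := hg i j
    simp only [g']
    split_ifs <;> omega
  let W := l.getD 0 0 + c + 1
  have lW : ∀ j, W ≤ j → g j = 0 := by
    intro j hj
    by_contra h
    have := (hg 0 j).1 (by omega)
    omega
  have mW : ∀ j, W ≤ j → g' j = 0 := by
    intro j hj
    simp only [g', show j ≠ c - 1 by omega, show j ≠ c by omega, if_false]
    exact lW j hj
  obtain ⟨F1, hF1⟩ := exists_T_to_H l ν g hg W lW
  obtain ⟨F2, hF2⟩ := HSet_card_le g g' ν W (c - 1) β hα4 (by omega) gc1
    (by rw [Nat.sub_add_cancel hc]; exact gc) (by simp [g'])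
    (by rw [Nat.sub_add_cancel hc]; simp [g', show c ≠ c - 1 by omega])
    (by
      intro j ha hb
      rw [Nat.sub_add_cancel hc] at hb
      simp [g', ha, hb])
  obtain ⟨F3, hF3⟩ := exists_H_to_T m ν g' hg' W mW
  obtain ⟨F4, hF4⟩ := exists_T_to_H m ν g' hg' W mW
  have : Finite (HSet g' ν W) := Set.finite_coe_iff.mpr (HSet_finite g' ν W mW)
  have : Finite {T : ℕ → ℕ → ℕ // IsSSYT m T ∧ HasContent m T ν} := Finite.of_injective F4 hF4
  exact Nat.card_le_card_of_injective (F3 ∘ F2 ∘ F1) (hF3.comp (hF2.comp hF1))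
end
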